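/- arXiv:2009.05017 — 2 statements merged into one kernel-verified Lean document; each statement's English description precedes it below -/
import Mathlib

section
/- For an extension B ⊆ A of k-algebras and any k-linear section σ of π : A → A/B, the formula d(a₀⊗α₁⊗⋯⊗α_{n−1}⊗a_n) = a₀σ(α₁)⊗α₂⊗⋯⊗α_{n−1}⊗a_n + Σ_{i=1}^{n−2}(−1)^i a₀⊗α₁⊗⋯⊗π(σ(α_i)σ(α_{i+1}))⊗⋯⊗α_{n−1}⊗a_n + (−1)^{n−1} a₀⊗α₁⊗⋯⊗α_{n−2}⊗σ(α_{n−1})a_n descends through the tensor products over B to a well-defined map d : A⊗_B(A/B)^{⊗_B(n−1)}⊗_B A → A⊗_B(A/B)^{⊗_B(n−2)}⊗_B A for every n ≥ 2, and the resulting map is a morphism of A-bimodules. -/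
open scoped TensorProduct
open MulOpposite PiTensorProduct

namespace JZH

variable (k : Type) [Field k]
variable (A : Type) [Ring A] [Algebra k A] (B : Subalgebra k A)

/-- The quotient `B`-bimodule `A/B`. -/
abbrev QM : Type := A ⧸ (Subalgebra.toSubmodule B)

/-- The canonical projection `π : A → A/B`. -/
noncomputable def πQ : A →ₗ[k] QM k A B := (Subalgebra.toSubmodule B).mkQ

/-- The left action of `b ∈ B` on `A/B`, induced by left multiplication. -/
noncomputable def Ql (b : B) : QM k A B →ₗ[k] QM k A B :=
  Submodule.mapQ _ _ (LinearMap.mulLeft k (b : A))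
    (fun a ha => by
      simp only [Submodule.mem_comap, LinearMap.mulLeft_apply, Subalgebra.mem_toSubmodule] at *
      exact B.mul_mem b.2 ha)

/-- The right action of `b ∈ B` on `A/B`, induced by right multiplication. -/
noncomputable def Qr (b : B) : QM k A B →ₗ[k] QM k A B :=
  Submodule.mapQ _ _ (LinearMap.mulRight k (b : A))
    (fun a ha => by
      simp only [Submodule.mem_comap, LinearMap.mulRight_apply, Subalgebra.mem_toSubmodule] at *
      exact B.mul_mem ha b.2)

/-- Merging of two adjacent entries of a tuple, using a given "product". -/
def mergeFun {M : Type} (mul : M → M → M) {n : ℕ} (a : Fin (n+1) → M) (j : Fin n) :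
    Fin n → M := fun l =>
  if (l : ℕ) < (j : ℕ) then a l.castSucc
  else if (l : ℕ) = (j : ℕ) then mul (a l.castSucc) (a l.succ)
  else a l.succ

/-- The ambient space `A ⊗[k] (A/B)^{⊗ n} ⊗[k] A` of the degree-`n` term of the normalised
relative bar resolution. -/
def barAmb (n : ℕ) : Type := A ⊗[k] ((⨂[k] (_ : Fin n), QM k A B) ⊗[k] A)

noncomputable instance barAmbAcg (n : ℕ) : AddCommGroup (barAmb k A B n) :=
  inferInstanceAs (AddCommGroup (A ⊗[k] ((⨂[k] (_ : Fin n), QM k A B) ⊗[k] A)))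

noncomputable instance barAmbMod (n : ℕ) : Module k (barAmb k A B n) :=
  inferInstanceAs (Module k (A ⊗[k] ((⨂[k] (_ : Fin n), QM k A B) ⊗[k] A)))

/-- The balancing relations of `A ⊗_B A` inside `A ⊗[k] A`. -/
def barRel0 : Submodule k (A ⊗[k] A) :=
  Submodule.span k {z : A ⊗[k] A | ∃ (a a' : A) (b : B),
    z = (a * b) ⊗ₜ[k] a' - a ⊗ₜ[k] ((b : A) * a')}

/-- The balancing relations of `A ⊗_B (A/B)^{⊗_B (n+1)} ⊗_B A` inside
`A ⊗[k] (A/B)^{⊗ (n+1)} ⊗[k] A`. -/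
noncomputable def barRel (n : ℕ) : Submodule k (barAmb k A B (n+1)) :=
  Submodule.span k
    ({z | ∃ (a a' : A) (α : Fin (n+1) → QM k A B) (b : B),
        z = (a * b) ⊗ₜ[k] ((tprod k α) ⊗ₜ[k] a')
            - a ⊗ₜ[k] ((tprod k (Function.update α 0 (Ql k A B b (α 0)))) ⊗ₜ[k] a')} ∪
     {z | ∃ (a a' : A) (α : Fin (n+1) → QM k A B) (b : B) (i : Fin n),
        z = a ⊗ₜ[k] ((tprod k (Function.update α i.castSucc
                (Qr k A B b (α i.castSucc)))) ⊗ₜ[k] a')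
            - a ⊗ₜ[k] ((tprod k (Function.update α i.succ (Ql k A B b (α i.succ)))) ⊗ₜ[k] a')} ∪
     {z | ∃ (a a' : A) (α : Fin (n+1) → QM k A B) (b : B),
        z = a ⊗ₜ[k] ((tprod k (Function.update α (Fin.last n)
                (Qr k A B b (α (Fin.last n))))) ⊗ₜ[k] a')
            - a ⊗ₜ[k] ((tprod k α) ⊗ₜ[k] ((b : A) * a'))})

/-- The degree-`n` term `A ⊗_B (A/B)^{⊗_B n} ⊗_B A` of the normalised relative bar
resolution. -/
def BarC : ℕ → Type
  | 0 => (A ⊗[k] A) ⧸ barRel0 k A B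
  | n + 1 => barAmb k A B (n+1) ⧸ barRel k A B n

noncomputable instance BarCacg : ∀ n, AddCommGroup (BarC k A B n)
  | 0 => inferInstanceAs (AddCommGroup (_ ⧸ _))
  | n + 1 => inferInstanceAs (AddCommGroup (_ ⧸ _))

noncomputable instance BarCmod : ∀ n, Module k (BarC k A B n)
  | 0 => inferInstanceAs (Module k (_ ⧸ _))
  | n + 1 => inferInstanceAs (Module k (_ ⧸ _))

/-- Class of an element of `A ⊗[k] A` in `A ⊗_B A`. -/
noncomputable def mkBar0 : (A ⊗[k] A) →ₗ[k] BarC k A B 0 := (barRel0 k A B).mkQ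

/-- Class of an element of the ambient tensor space in the degree-`(n+1)` bar term. -/
noncomputable def mkBar (n : ℕ) : barAmb k A B (n+1) →ₗ[k] BarC k A B (n+1) :=
  (barRel k A B n).mkQ

variable (σ : QM k A B →ₗ[k] A)

/-- Bar differential formula, lowest degree:
`d(a₀ ⊗ α ⊗ a₁) = a₀σ(α) ⊗ a₁ − a₀ ⊗ σ(α)a₁` (before passing to the quotient). -/
noncomputable def barZero (a : A) (α : Fin 1 → QM k A B) (a' : A) : A ⊗[k] A :=
  (a * σ (α 0)) ⊗ₜ[k] a' - a ⊗ₜ[k] (σ (α 0) * a')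

/-- Bar differential formula on elementary tensors (values in the ambient tensor space). -/
noncomputable def barSucc (n : ℕ) (a : A) (α : Fin (n+2) → QM k A B) (a' : A) :
    barAmb k A B (n+1) :=
  (a * σ (α 0)) ⊗ₜ[k] ((tprod k fun i : Fin (n+1) => α i.succ) ⊗ₜ[k] a')
  + ∑ j : Fin (n+1), ((-1 : ℤ) ^ ((j : ℕ) + 1)) •
      (a ⊗ₜ[k] ((tprod k (mergeFun (fun y z => πQ k A B (σ y * σ z)) α j)) ⊗ₜ[k] a'))
  + ((-1 : ℤ) ^ (n + 2)) •
      (a ⊗ₜ[k] ((tprod k fun i : Fin (n+1) => α i.castSucc) ⊗ₜ[k]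
        (σ (α (Fin.last (n+1))) * a')))

/-- `d` is the family of normalised relative bar differentials, for the section `σ`. -/
def IsBarDiff (d : ∀ n, BarC k A B (n+1) →ₗ[k] BarC k A B n) : Prop :=
  (∀ (a : A) (α : Fin 1 → QM k A B) (a' : A),
    d 0 (mkBar k A B 0 (a ⊗ₜ[k] ((tprod k α) ⊗ₜ[k] a'))) =
      mkBar0 k A B (barZero k A B σ a α a')) ∧
  (∀ (n : ℕ) (a : A) (α : Fin (n+2) → QM k A B) (a' : A),
    d (n+1) (mkBar k A B (n+1) (a ⊗ₜ[k] ((tprod k α) ⊗ₜ[k] a'))) =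
      mkBar k A B n (barSucc k A B σ n a α a'))

/-- `μ` is the multiplication augmentation `A ⊗_B A → A`. -/
def IsBarMult (μ : BarC k A B 0 →ₗ[k] A) : Prop :=
  ∀ (a a' : A), μ (mkBar0 k A B (a ⊗ₜ[k] a')) = a * a'

/-- `L` is the family of left multiplications by elements of `A` on the bar resolution. -/
def IsBarLeftAct (L : ∀ (_ : A) (n : ℕ), BarC k A B n →ₗ[k] BarC k A B n) : Prop :=
  (∀ (a a₀ a' : A), L a 0 (mkBar0 k A B (a₀ ⊗ₜ[k] a')) = mkBar0 k A B ((a * a₀) ⊗ₜ[k] a')) ∧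
  (∀ (a : A) (n : ℕ) (a₀ : A) (α : Fin (n+1) → QM k A B) (a' : A),
    L a (n+1) (mkBar k A B n (a₀ ⊗ₜ[k] ((tprod k α) ⊗ₜ[k] a'))) =
      mkBar k A B n ((a * a₀) ⊗ₜ[k] ((tprod k α) ⊗ₜ[k] a')))

/-- `R` is the family of right multiplications by elements of `A` on the bar resolution. -/
def IsBarRightAct (R : ∀ (_ : A) (n : ℕ), BarC k A B n →ₗ[k] BarC k A B n) : Prop :=
  (∀ (a a₀ a' : A), R a 0 (mkBar0 k A B (a₀ ⊗ₜ[k] a')) = mkBar0 k A B (a₀ ⊗ₜ[k] (a' * a))) ∧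
  (∀ (a : A) (n : ℕ) (a₀ : A) (α : Fin (n+1) → QM k A B) (a' : A),
    R a (n+1) (mkBar k A B n (a₀ ⊗ₜ[k] ((tprod k α) ⊗ₜ[k] a'))) =
      mkBar k A B n (a₀ ⊗ₜ[k] ((tprod k α) ⊗ₜ[k] (a' * a))))

end JZH

/-!
On words `(a₀, …, aₙ₊₁)` in `A`, rather than in `A` and `A/B`, the differential is the ordinary
alternating sum of the words in which two adjacent letters are multiplied. A linear map out of the
`n`-th bar term is the same as a multilinear map on such words that is `B`-balanced and vanishes
when an inner letter lies in `B`; here `σ` serves to lift elements of `A/B` to letters. Merging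
adjacent letters preserves this class of multilinear maps: if an inner letter lies in `B`, the two
faces that merge it with its neighbours agree by balancedness and have opposite signs, and every
other face still contains that letter. Hence the differential exists and does not depend on the
section, and by associativity it commutes with multiplication of the outer letters.
-/

namespace JZH

open Function

section Merge

variable {M : Type} {n : ℕ}

theorem mergeFun_self (mul : M → M → M) (w : Fin (n + 1) → M) (j : Fin n) :
    mergeFun mul w j j = mul (w j.castSucc) (w j.succ) := by
  simp [mergeFun]

theorem mergeFun_of_lt (mul : M → M → M) (w : Fin (n + 1) → M) {j l : Fin n} (h : l < j) :
    mergeFun mul w j l = w l.castSucc :=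
  if_pos h

theorem mergeFun_of_gt (mul : M → M → M) (w : Fin (n + 1) → M) {j l : Fin n} (h : j < l) :
    mergeFun mul w j l = w l.succ :=
  (if_neg (not_lt_of_gt h)).trans (if_neg (Fin.val_ne_of_ne h.ne'))

theorem comp_mergeFun_comp {N : Type} {p : M → N} {s : N → M} (hps : LeftInverse p s)
    (mul : M → M → M) (α : Fin (n + 1) → N) (j : Fin n) :
    p ∘ mergeFun mul (s ∘ α) j = mergeFun (fun y z => p (mul (s y) (s z))) α j := by
  ext l
  rcases lt_trichotomy l j with h | rfl | h
  · rw [comp_apply, mergeFun_of_lt _ _ h, mergeFun_of_lt _ _ h, comp_apply, hps]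
  · rw [comp_apply, mergeFun_self, mergeFun_self, comp_apply, comp_apply]
  · rw [comp_apply, mergeFun_of_gt _ _ h, mergeFun_of_gt _ _ h, comp_apply, hps]

theorem mergeFun_predAbove_of_ne (mul : M → M → M) (w : Fin (n + 1) → M) {j : Fin n}
    {i : Fin (n + 1)} (hl : i ≠ j.castSucc) (hr : i ≠ j.succ) :
    mergeFun mul w j (j.predAbove i) = w i := by
  rcases lt_or_gt_of_ne hl with h | h
  · rw [Fin.predAbove_of_le_castSucc _ _ h.le, mergeFun_of_lt _ _ (by exact h),
      Fin.castSucc_castPred]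
  · rw [Fin.predAbove_of_castSucc_lt _ _ h, mergeFun_of_gt _ _ (by grind), Fin.succ_pred]

theorem mergeFun_update (mul : M → M → M) (w : Fin (n + 1) → M) (j : Fin n) (i : Fin (n + 1))
    (x : M) :
    mergeFun mul (update w i x) j =
      update (mergeFun mul w j) (j.predAbove i)
        (mergeFun mul (update w i x) j (j.predAbove i)) := by
  refine eq_update_iff.2 ⟨rfl, fun l hl => ?_⟩
  have castSucc_ne (h : l ≤ j) : l.castSucc ≠ i := by
    rintro rfl
    exact hl (Fin.predAbove_castSucc_of_le _ _ h).symm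
  have succ_ne (h : j ≤ l) : l.succ ≠ i := by
    rintro rfl
    exact hl (Fin.predAbove_succ_of_le _ _ h).symm
  rcases lt_trichotomy l j with h | rfl | h
  · simp only [mergeFun_of_lt _ _ h, update_of_ne (castSucc_ne h.le)]
  · simp only [mergeFun_self, update_of_ne (castSucc_ne le_rfl), update_of_ne (succ_ne le_rfl)]
  · simp only [mergeFun_of_gt _ _ h, update_of_ne (succ_ne h.le)]

theorem mergeFun_update_castSucc (mul : M → M → M) (w : Fin (n + 1) → M) (j : Fin n) (x : M) :
    mergeFun mul (update w j.castSucc x) j = update (mergeFun mul w j) j (mul x (w j.succ)) := by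
  rw [mergeFun_update, Fin.predAbove_castSucc_self, mergeFun_self, update_self,
    update_of_ne Fin.castSucc_lt_succ.ne']

theorem mergeFun_update_succ (mul : M → M → M) (w : Fin (n + 1) → M) (j : Fin n) (x : M) :
    mergeFun mul (update w j.succ x) j = update (mergeFun mul w j) j (mul (w j.castSucc) x) := by
  rw [mergeFun_update, Fin.predAbove_succ_self, mergeFun_self, update_self,
    update_of_ne Fin.castSucc_lt_succ.ne]

theorem mergeFun_update_of_ne (mul : M → M → M) (w : Fin (n + 1) → M) {j : Fin n}
    {i : Fin (n + 1)} (hl : i ≠ j.castSucc) (hr : i ≠ j.succ) (x : M) :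
    mergeFun mul (update w i x) j = update (mergeFun mul w j) (j.predAbove i) x := by
  rw [mergeFun_update, mergeFun_predAbove_of_ne _ _ hl hr, update_self]

theorem mul_mulSingle {ι : Type*} {M : ι → Type*} [DecidableEq ι] [∀ i, MulOneClass (M i)]
    (w : ∀ i, M i) (i : ι) (b : M i) : w * Pi.mulSingle i b = update w i (w i * b) := by
  refine eq_update_iff.2 ⟨by simp, fun l hl => ?_⟩
  simp [hl]

theorem mulSingle_mul {ι : Type*} {M : ι → Type*} [DecidableEq ι] [∀ i, MulOneClass (M i)]
    (w : ∀ i, M i) (i : ι) (b : M i) : Pi.mulSingle i b * w = update w i (b * w i) := by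
  refine eq_update_iff.2 ⟨by simp, fun l hl => ?_⟩
  simp [hl]

theorem mergeFun_mul_mulSingle [Monoid M] (w : Fin (n + 1) → M) {j : Fin n} {i : Fin (n + 1)}
    (hi : i ≠ j.castSucc) (b : M) :
    mergeFun (· * ·) (w * Pi.mulSingle i b) j =
      mergeFun (· * ·) w j * Pi.mulSingle (j.predAbove i) b := by
  rw [mul_mulSingle, mul_mulSingle]
  obtain rfl | hr := eq_or_ne i j.succ
  · rw [mergeFun_update_succ, Fin.predAbove_succ_self, mergeFun_self, mul_assoc]
  · rw [mergeFun_update_of_ne _ _ hi hr, mergeFun_predAbove_of_ne _ _ hi hr]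

theorem mergeFun_mulSingle_mul [Monoid M] (w : Fin (n + 1) → M) {j : Fin n} {i : Fin (n + 1)}
    (hi : i ≠ j.succ) (b : M) :
    mergeFun (· * ·) (Pi.mulSingle i b * w) j =
      Pi.mulSingle (j.predAbove i) b * mergeFun (· * ·) w j := by
  rw [mulSingle_mul, mulSingle_mul]
  obtain rfl | hl := eq_or_ne i j.castSucc
  · rw [mergeFun_update_castSucc, Fin.predAbove_castSucc_self, mergeFun_self, mul_assoc]
  · rw [mergeFun_update_of_ne _ _ hl hi, mergeFun_predAbove_of_ne _ _ hl hi]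

theorem mergeFun_mul_mulSingle_castSucc [Monoid M] (w : Fin (n + 1) → M) (j : Fin n) (b : M) :
    mergeFun (· * ·) (w * Pi.mulSingle j.castSucc b) j =
      mergeFun (· * ·) (Pi.mulSingle j.succ b * w) j := by
  rw [mul_mulSingle, mulSingle_mul, mergeFun_update_castSucc, mergeFun_update_succ, mul_assoc]

theorem mergeFun_castSucc_eq_removeNth_mul [Monoid M] (w : Fin (n + 2) → M) (j : Fin n) :
    mergeFun (· * ·) w j.castSucc =
      j.castSucc.succ.removeNth w * Pi.mulSingle j.castSucc (w j.castSucc.succ) := by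
  rw [mul_mulSingle]
  refine eq_update_iff.2 ⟨?_, fun l hl => ?_⟩
  · rw [mergeFun_self, Fin.removeNth_apply, Fin.succAbove_succ_of_le _ _ le_rfl]
  · rcases lt_or_gt_of_ne hl with h | h
    · rw [mergeFun_of_lt _ _ h, Fin.removeNth_apply, Fin.succAbove_succ_of_le _ _ h.le]
    · rw [mergeFun_of_gt _ _ h, Fin.removeNth_apply, Fin.succAbove_succ_of_lt _ _ h]

theorem mergeFun_succ_eq_mul_removeNth [Monoid M] (w : Fin (n + 2) → M) (j : Fin n) :
    mergeFun (· * ·) w j.succ =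
      Pi.mulSingle j.succ (w j.castSucc.succ) * j.castSucc.succ.removeNth w := by
  rw [mulSingle_mul]
  refine eq_update_iff.2 ⟨?_, fun l hl => ?_⟩
  · rw [mergeFun_self, Fin.removeNth_apply, Fin.succAbove_succ_of_lt _ _ Fin.castSucc_lt_succ]
    rfl
  · rcases lt_or_gt_of_ne hl with h | h
    · rw [mergeFun_of_lt _ _ h, Fin.removeNth_apply,
        Fin.succAbove_succ_of_le _ _ (Fin.le_castSucc_iff.2 h)]
    · rw [mergeFun_of_gt _ _ h, Fin.removeNth_apply,
        Fin.succAbove_succ_of_lt _ _ (Fin.castSucc_lt_succ.trans h)]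

end Merge

section Multilinear

variable {k : Type*} [CommRing k]

theorem multilinear_congr_of_forall_sub {ι : Type*} [Finite ι] {M : ι → Type*} {X : Type*}
    [∀ i, AddCommGroup (M i)] [∀ i, Module k (M i)] [AddCommGroup X] [Module k X]
    (F : MultilinearMap k M X) {x y : ∀ i, M i}
    (h : ∀ i z, z i = x i - y i → F z = 0) : F x = F y := by
  classical
  have := Fintype.ofFinite ι
  suffices piecewise_eq : ∀ s : Finset ι, F (s.piecewise x y) = F y by
    simpa using piecewise_eq Finset.univ
  intro s
  induction s using Finset.induction_on with
  | empty => rw [Finset.piecewise_empty]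
  | insert i s hi ih =>
    have hy : update (s.piecewise x y) i (y i) = s.piecewise x y := by
      rw [update_eq_self_iff, Finset.piecewise_eq_of_notMem _ _ _ hi]
    rw [← ih, Finset.piecewise_insert, ← sub_eq_zero]
    conv_lhs => rw [← hy, update_idem, ← MultilinearMap.map_update_sub]
    exact h i _ (update_self ..)

variable {A : Type} [Ring A] [Algebra k A] {X : Type*} [AddCommGroup X] [Module k X] {n : ℕ}

/-- The `j`-th face `w ↦ T(w₀, …, wⱼwⱼ₊₁, …, wₙ)` of a multilinear map `T` on words in `A`, one
summand of the bar differential. -/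
def face (T : MultilinearMap k (fun _ : Fin n => A) X) (j : Fin n) :
    MultilinearMap k (fun _ : Fin (n + 1) => A) X :=
  MultilinearMap.mk' (fun w => T (mergeFun (· * ·) w j))
    (fun w i x y => by
      obtain rfl | hl := eq_or_ne i j.castSucc
      · simp only [mergeFun_update_castSucc, add_mul, T.map_update_add]
      obtain rfl | hr := eq_or_ne i j.succ
      · simp only [mergeFun_update_succ, mul_add, T.map_update_add]
      simp only [mergeFun_update_of_ne _ _ hl hr, T.map_update_add])
    (fun w i c x => by
      obtain rfl | hl := eq_or_ne i j.castSucc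
      · simp only [mergeFun_update_castSucc, smul_mul_assoc, T.map_update_smul]
      obtain rfl | hr := eq_or_ne i j.succ
      · simp only [mergeFun_update_succ, mul_smul_comm, T.map_update_smul]
      simp only [mergeFun_update_of_ne _ _ hl hr, T.map_update_smul])

theorem face_apply (T : MultilinearMap k (fun _ : Fin n => A) X) (j : Fin n)
    (w : Fin (n + 1) → A) : face T j w = T (mergeFun (· * ·) w j) :=
  rfl

/-- The bar coboundary `∑ⱼ (-1)ʲ T(w₀, …, wⱼwⱼ₊₁, …, wₙ)` of a multilinear map `T` on words in
`A`. Applied to the universal `T` with values in a bar term it becomes the bar differential. -/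
def barCoboundary (T : MultilinearMap k (fun _ : Fin n => A) X) :
    MultilinearMap k (fun _ : Fin (n + 1) => A) X :=
  ∑ j : Fin n, (-1 : ℤ) ^ (j : ℕ) • face T j

theorem barCoboundary_apply (T : MultilinearMap k (fun _ : Fin n => A) X) (w : Fin (n + 1) → A) :
    barCoboundary T w = ∑ j : Fin n, (-1 : ℤ) ^ (j : ℕ) • T (mergeFun (· * ·) w j) := by
  simp only [barCoboundary, sum_apply, smul_apply, face_apply]

/-- Precomposition of `T` with left multiplication of each letter `wᵢ` by `cᵢ`. Taking
`c = Pi.mulSingle 0 a` gives the outer left action of `a`. -/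
def mulLeftArgs (T : MultilinearMap k (fun _ : Fin n => A) X) (c : Fin n → A) :
    MultilinearMap k (fun _ : Fin n => A) X :=
  T.compLinearMap fun i => LinearMap.mulLeft k (c i)

theorem mulLeftArgs_apply (T : MultilinearMap k (fun _ : Fin n => A) X) (c w : Fin n → A) :
    mulLeftArgs T c w = T (c * w) :=
  rfl

/-- Precomposition of `T` with right multiplication of each letter `wᵢ` by `cᵢ`. Taking
`c = Pi.mulSingle (Fin.last _) a` gives the outer right action of `a`. -/
def mulRightArgs (T : MultilinearMap k (fun _ : Fin n => A) X) (c : Fin n → A) :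
    MultilinearMap k (fun _ : Fin n => A) X :=
  T.compLinearMap fun i => LinearMap.mulRight k (c i)

theorem mulRightArgs_apply (T : MultilinearMap k (fun _ : Fin n => A) X) (c w : Fin n → A) :
    mulRightArgs T c w = T (w * c) :=
  rfl

/-- `T` is `B`-balanced: it factors through tensor products over `B`, because a factor `b ∈ B` may
be moved from the right of a letter to the left of the next one. -/
def IsBalanced (B : Subalgebra k A) (T : MultilinearMap k (fun _ : Fin (n + 2) => A) X) : Prop :=
  ∀ (w : Fin (n + 2) → A) (i : Fin (n + 1)) (b : B),
    T (w * Pi.mulSingle i.castSucc (b : A)) = T (Pi.mulSingle i.succ (b : A) * w)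

/-- `T` vanishes as soon as an inner letter lies in `B`, so that it depends on the inner letters
only through their classes in `A/B`. -/
def IsNormalized (B : Subalgebra k A) (T : MultilinearMap k (fun _ : Fin (n + 2) => A) X) :
    Prop :=
  ∀ (w : Fin (n + 2) → A) (i : Fin (n + 2)), i ≠ 0 → i ≠ Fin.last (n + 1) → w i ∈ B → T w = 0

variable {B : Subalgebra k A} {T : MultilinearMap k (fun _ : Fin (n + 2) => A) X}

theorem IsBalanced.barCoboundary (hT : IsBalanced B T) : IsBalanced B (barCoboundary T) := by
  intro w i b
  rw [barCoboundary_apply, barCoboundary_apply]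
  refine Finset.sum_congr rfl fun j _ => congrArg _ ?_
  obtain rfl | hij := eq_or_ne i j
  · rw [mergeFun_mul_mulSingle_castSucc]
  obtain ⟨l, rfl⟩ := Fin.exists_succAbove_eq hij
  have hcast : j.predAbove (j.succAbove l).castSucc = l.castSucc := by
    rw [← Fin.castSucc_succAbove_castSucc, Fin.predAbove_succAbove]
  have hsucc : j.predAbove (j.succAbove l).succ = l.succ := by
    apply Fin.succAbove_right_injective (p := j.succ)
    rw [Fin.succ_succAbove_predAbove (by simp), Fin.succ_succAbove_succ]
  rw [mergeFun_mul_mulSingle _ (by simp), mergeFun_mulSingle_mul _ (by simp), hcast, hsucc, hT]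

theorem IsNormalized.barCoboundary (hT : IsNormalized B T) (hT' : IsBalanced B T) :
    IsNormalized B (barCoboundary T) := by
  intro w p hp_zero hp_last hp
  obtain ⟨p, rfl⟩ := Fin.exists_succ_eq.2 hp_zero
  obtain ⟨i, rfl⟩ := Fin.exists_castSucc_eq.2 (fun h => hp_last (congrArg Fin.succ h))
  have cancel : T (mergeFun (· * ·) w i.castSucc) = T (mergeFun (· * ·) w i.succ) := by
    rw [mergeFun_castSucc_eq_removeNth_mul, mergeFun_succ_eq_mul_removeNth]
    exact hT' _ i ⟨_, hp⟩
  rw [barCoboundary_apply, Fintype.sum_eq_add i.castSucc i.succ Fin.castSucc_lt_succ.ne]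
  · simp [cancel, pow_succ]
  · rintro j ⟨hj_castSucc, hj_succ⟩
    have hl : i.castSucc.succ ≠ j.castSucc := by
      rw [Fin.succ_castSucc]
      exact fun h => hj_succ (Fin.castSucc_injective _ h).symm
    have hr : i.castSucc.succ ≠ j.succ := fun h => hj_castSucc (Fin.succ_injective _ h).symm
    rw [hT _ (j.predAbove i.castSucc.succ), smul_zero]
    · intro h
      rw [← Fin.succ_succAbove_predAbove hr, h, Fin.succ_succAbove_zero] at hp_zero
      exact hp_zero rfl
    · intro h
      rw [← Fin.succAbove_predAbove hl, h,
        Fin.succAbove_ne_last_last (Fin.castSucc_ne_last j)] at hp_last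
      exact hp_last rfl
    · rwa [mergeFun_predAbove_of_ne _ _ hl hr]

theorem IsBalanced.mulLeftArgs (hT : IsBalanced B T) (a : A) :
    IsBalanced B (mulLeftArgs T (Pi.mulSingle 0 a)) := by
  intro w i b
  have hcomm := Pi.mulSingle_commute (f := fun _ : Fin (n + 2) => A) (Fin.succ_ne_zero i) b a
  rw [mulLeftArgs_apply, mulLeftArgs_apply, ← mul_assoc, hT, ← mul_assoc, ← mul_assoc, hcomm.eq]

theorem IsBalanced.mulRightArgs (hT : IsBalanced B T) (a : A) :
    IsBalanced B (mulRightArgs T (Pi.mulSingle (Fin.last _) a)) := by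
  intro w i b
  have hcomm := Pi.mulSingle_commute (f := fun _ : Fin (n + 2) => A) (Fin.castSucc_ne_last i) b a
  rw [mulRightArgs_apply, mulRightArgs_apply, mul_assoc, mul_assoc, hcomm.eq, ← mul_assoc, hT]

theorem IsNormalized.mulLeftArgs (hT : IsNormalized B T) (a : A) :
    IsNormalized B (mulLeftArgs T (Pi.mulSingle 0 a)) := by
  intro w i hi_zero hi_last hi
  refine hT _ i hi_zero hi_last ?_
  simpa [hi_zero] using hi

theorem IsNormalized.mulRightArgs (hT : IsNormalized B T) (a : A) :
    IsNormalized B (mulRightArgs T (Pi.mulSingle (Fin.last _) a)) := by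
  intro w i hi_zero hi_last hi
  refine hT _ i hi_zero hi_last ?_
  simpa [hi_last] using hi

end Multilinear

section Word

variable {M : Type*} {n : ℕ}

/-- The word `(a, x₀, …, xₙ₋₁, a')`, separating the two outer letters from the inner ones; the
inner letter `xᵢ` sits at position `i.castSucc.succ`. -/
def word (a : M) (x : Fin n → M) (a' : M) : Fin (n + 2) → M :=
  Fin.cons a (Fin.snoc x a' : Fin (n + 1) → M)

theorem word_zero (a : M) (x : Fin n → M) (a' : M) : word a x a' 0 = a :=
  rfl

theorem word_castSucc_succ (a : M) (x : Fin n → M) (a' : M) (i : Fin n) :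
    word a x a' i.castSucc.succ = x i := by
  rw [word, Fin.cons_succ, Fin.snoc_castSucc]

theorem word_last (a : M) (x : Fin n → M) (a' : M) : word a x a' (Fin.last (n + 1)) = a' := by
  rw [word, ← Fin.succ_last, Fin.cons_succ, Fin.snoc_last]

theorem exists_eq_word (w : Fin (n + 2) → M) : ∃ a x a', w = word a x a' :=
  ⟨w 0, Fin.init (Fin.tail w), Fin.tail w (Fin.last n), by
    rw [word, Fin.snoc_init_self, Fin.cons_self_tail]⟩

theorem update_word_zero (a : M) (x : Fin n → M) (a' c : M) :
    update (word a x a') 0 c = word c x a' :=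
  Fin.update_cons_zero ..

theorem update_word_castSucc_succ (a : M) (x : Fin n → M) (a' : M) (i : Fin n) (c : M) :
    update (word a x a') i.castSucc.succ c = word a (update x i c) a' := by
  rw [word, word, Fin.snoc_update, Fin.cons_update]

theorem update_word_last (a : M) (x : Fin n → M) (a' c : M) :
    update (word a x a') (Fin.last (n + 1)) c = word a x c := by
  rw [word, word, ← Fin.succ_last, ← Fin.cons_update, Fin.update_snoc_last]

theorem word_mul_mulSingle_zero [MulOneClass M] (a : M) (x : Fin n → M) (a' b : M) :
    word a x a' * Pi.mulSingle 0 b = word (a * b) x a' := by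
  rw [mul_mulSingle, update_word_zero, word_zero]

theorem mulSingle_zero_mul_word [MulOneClass M] (a : M) (x : Fin n → M) (a' b : M) :
    Pi.mulSingle 0 b * word a x a' = word (b * a) x a' := by
  rw [mulSingle_mul, update_word_zero, word_zero]

theorem word_mul_mulSingle_castSucc_succ [MulOneClass M] (a : M) (x : Fin n → M) (a' b : M)
    (i : Fin n) :
    word a x a' * Pi.mulSingle i.castSucc.succ b = word a (update x i (x i * b)) a' := by
  rw [mul_mulSingle, update_word_castSucc_succ, word_castSucc_succ]

theorem mulSingle_castSucc_succ_mul_word [MulOneClass M] (a : M) (x : Fin n → M) (a' b : M)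
    (i : Fin n) :
    Pi.mulSingle i.castSucc.succ b * word a x a' = word a (update x i (b * x i)) a' := by
  rw [mulSingle_mul, update_word_castSucc_succ, word_castSucc_succ]

theorem word_mul_mulSingle_last [MulOneClass M] (a : M) (x : Fin n → M) (a' b : M) :
    word a x a' * Pi.mulSingle (Fin.last (n + 1)) b = word a x (a' * b) := by
  rw [mul_mulSingle, update_word_last, word_last]

theorem mulSingle_last_mul_word [MulOneClass M] (a : M) (x : Fin n → M) (a' b : M) :
    Pi.mulSingle (Fin.last (n + 1)) b * word a x a' = word a x (b * a') := by
  rw [mulSingle_mul, update_word_last, word_last]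

end Word

section MergeWord

variable {M : Type} {n : ℕ}

theorem mergeFun_word_zero (mul : M → M → M) (a : M) (x : Fin (n + 1) → M) (a' : M) :
    mergeFun mul (word a x a') 0 = word (mul a (x 0)) (Fin.tail x) a' := by
  ext l
  refine Fin.cases ?_ (fun l => ?_) l
  · rw [mergeFun_self, ← Fin.castSucc_zero, word_castSucc_succ]
    rfl
  rw [mergeFun_of_gt _ _ (Fin.succ_pos l)]
  refine Fin.lastCases ?_ (fun l => ?_) l
  · rw [Fin.succ_last, Fin.succ_last, word_last, word_last]
  · rw [word_castSucc_succ, ← Fin.castSucc_succ, word_castSucc_succ]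
    rfl

theorem mergeFun_word_castSucc_succ (mul : M → M → M) (a : M) (x : Fin (n + 1) → M) (a' : M)
    (j : Fin n) :
    mergeFun mul (word a x a') j.castSucc.succ = word a (mergeFun mul x j) a' := by
  ext l
  refine Fin.cases ?_ (fun l => ?_) l
  · rw [mergeFun_of_lt _ _ (Fin.succ_pos _)]
    rfl
  refine Fin.lastCases ?_ (fun l => ?_) l
  · rw [mergeFun_of_gt _ _ (Fin.succ_lt_succ_iff.2 (Fin.castSucc_lt_last j)), Fin.succ_last,
      Fin.succ_last, word_last, word_last]
  rw [word_castSucc_succ]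
  rcases lt_trichotomy l j with h | rfl | h
  · rw [mergeFun_of_lt _ _ (Fin.succ_lt_succ_iff.2 (Fin.castSucc_lt_castSucc_iff.2 h)),
      mergeFun_of_lt _ _ h, ← Fin.succ_castSucc, word_castSucc_succ]
  · rw [mergeFun_self, mergeFun_self, ← Fin.succ_castSucc, word_castSucc_succ,
      Fin.succ_castSucc, word_castSucc_succ]
  · rw [mergeFun_of_gt _ _ (Fin.succ_lt_succ_iff.2 (Fin.castSucc_lt_castSucc_iff.2 h)),
      mergeFun_of_gt _ _ h, Fin.succ_castSucc, word_castSucc_succ]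

theorem mergeFun_word_last (mul : M → M → M) (a : M) (x : Fin (n + 1) → M) (a' : M) :
    mergeFun mul (word a x a') (Fin.last (n + 1)) =
      word a (Fin.init x) (mul (x (Fin.last n)) a') := by
  ext l
  refine Fin.lastCases ?_ (fun l => ?_) l
  · rw [mergeFun_self, Fin.succ_last, word_last, word_last, ← Fin.succ_last, ← Fin.succ_castSucc,
      word_castSucc_succ]
  rw [mergeFun_of_lt _ _ (Fin.castSucc_lt_last l)]
  refine Fin.cases rfl (fun l => ?_) l
  rw [← Fin.succ_castSucc, ← Fin.succ_castSucc, word_castSucc_succ, word_castSucc_succ]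
  rfl

end MergeWord

section TensorWord

variable {k : Type*} [CommRing k] {A Q X : Type*} [AddCommGroup A] [Module k A]
  [AddCommGroup Q] [Module k Q] [AddCommGroup X] [Module k X] {n : ℕ}

/-- The universal multilinear map `(a, a') ↦ a ⊗ a'` on words of length two. -/
noncomputable def pairTensor : MultilinearMap k (fun _ : Fin 2 => A) (A ⊗[k] A) :=
  ((MultilinearMap.ofSubsingletonₗ k k A (A ⊗[k] A) (0 : Fin 1)).toLinearMap ∘ₗ
    TensorProduct.mk k A A).uncurryLeft

theorem pairTensor_word (a : A) (x : Fin 0 → A) (a' : A) :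
    pairTensor (word a x a') = a ⊗ₜ[k] a' :=
  rfl

/-- The linear map on `A ⊗ A` corresponding to a multilinear map on words of length two. -/
noncomputable def pairLift (T : MultilinearMap k (fun _ : Fin 2 => A) X) : A ⊗[k] A →ₗ[k] X :=
  TensorProduct.lift
    ((MultilinearMap.ofSubsingletonₗ k k A X (0 : Fin 1)).symm.toLinearMap ∘ₗ T.curryLeft)

theorem pairLift_tmul (T : MultilinearMap k (fun _ : Fin 2 => A) X) (a : A) (x : Fin 0 → A)
    (a' : A) : pairLift T (a ⊗ₜ[k] a') = T (word a x a') := by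
  refine congrArg T (funext fun i => ?_)
  fin_cases i <;> rfl

/-- The multilinear map `(a, x₀, …, xₙ₋₁, a') ↦ a ⊗ (p x₀ ⊗ ⋯ ⊗ p xₙ₋₁) ⊗ a'`; for `p = π` it sends
words in `A` to elementary tensors of the ambient space of a bar term. -/
noncomputable def wordTensor (p : A →ₗ[k] Q) (n : ℕ) :
    MultilinearMap k (fun _ : Fin (n + 2) => A) (A ⊗[k] ((⨂[k] (_ : Fin n), Q) ⊗[k] A)) :=
  let innerRight : MultilinearMap k (fun _ : Fin (n + 1) => A) ((⨂[k] (_ : Fin n), Q) ⊗[k] A) :=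
    MultilinearMap.uncurryRight (M := fun _ : Fin (n + 1) => A)
      ((TensorProduct.mk k _ A).compMultilinearMap
        ((PiTensorProduct.tprod k).compLinearMap fun _ => p))
  LinearMap.uncurryLeft (M := fun _ : Fin (n + 2) => A)
    { toFun := fun a => (TensorProduct.mk k A _ a).compMultilinearMap innerRight
      map_add' := fun a b => MultilinearMap.ext fun _ => TensorProduct.add_tmul a b _
      map_smul' := fun _ _ => rfl }

theorem wordTensor_word (p : A →ₗ[k] Q) (a : A) (x : Fin n → A) (a' : A) :
    wordTensor p n (word a x a') = a ⊗ₜ[k] (tprod k (p ∘ x) ⊗ₜ[k] a') := by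
  have inner : Fin.init (Fin.tail (word a x a')) = x := Fin.init_snoc ..
  have last : Fin.tail (word a x a') (Fin.last n) = a' := word_last ..
  change a ⊗ₜ (tprod k (p ∘ Fin.init (Fin.tail (word a x a'))) ⊗ₜ
    Fin.tail (word a x a') (Fin.last n)) = _
  rw [inner, last]

/-- The linear map `a ⊗ (q₀ ⊗ ⋯ ⊗ qₙ₋₁) ⊗ a' ↦ T(a, s q₀, …, s qₙ₋₁, a')`, which extends `T` along
`wordTensor p` when `s` is a section of `p` and `T` sees the inner letters only through `p`. -/
noncomputable def wordLift (s : Q →ₗ[k] A) (T : MultilinearMap k (fun _ : Fin (n + 2) => A) X) :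
    A ⊗[k] ((⨂[k] (_ : Fin n), Q) ⊗[k] A) →ₗ[k] X :=
  TensorProduct.lift <| TensorProduct.uncurry (RingHom.id k) _ _ _ ∘ₗ
    PiTensorProduct.lift.toLinearMap ∘ₗ MultilinearMap.compLinearMapₗ (fun _ => s) ∘ₗ
      (multilinearCurryRightEquiv k (fun _ : Fin (n + 1) => A) X).toLinearMap ∘ₗ T.curryLeft

theorem wordLift_tmul (s : Q →ₗ[k] A) (T : MultilinearMap k (fun _ : Fin (n + 2) => A) X)
    (a : A) (q : Fin n → Q) (a' : A) :
    wordLift s T (a ⊗ₜ[k] (tprod k q ⊗ₜ[k] a')) = T (word a (s ∘ q) a') := by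
  change (PiTensorProduct.lift _ (tprod k q) : A →ₗ[k] X) a' = _
  rw [PiTensorProduct.lift.tprod]
  rfl

end TensorWord

section Descent

variable {k : Type*} [CommRing k] {A : Type} [Ring A] [Algebra k A] {B : Subalgebra k A}
  {X : Type*} [AddCommGroup X] [Module k X] {n : ℕ}

theorem isBalanced_iff_word_zero {T : MultilinearMap k (fun _ : Fin 2 => A) X} :
    IsBalanced B T ↔
      ∀ a (x : Fin 0 → A) a' (b : B), T (word (a * b) x a') = T (word a x (b * a')) := by
  refine ⟨fun hT a x a' b => ?_, fun h w i b => ?_⟩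
  · rw [← word_mul_mulSingle_zero, ← mulSingle_last_mul_word]
    exact hT _ 0 b
  · obtain ⟨a, x, a', rfl⟩ := exists_eq_word w
    obtain rfl : i = 0 := Fin.fin_one_eq_zero i
    rw [Fin.castSucc_zero, word_mul_mulSingle_zero, h, ← mulSingle_last_mul_word]
    rfl

theorem isBalanced_iff_word_succ {T : MultilinearMap k (fun _ : Fin (n + 3) => A) X} :
    IsBalanced B T ↔
      (∀ a x a' (b : B), T (word (a * b) x a') = T (word a (update x 0 (b * x 0)) a')) ∧
      (∀ a x a' (b : B) (i : Fin n), T (word a (update x i.castSucc (x i.castSucc * b)) a') =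
        T (word a (update x i.succ (b * x i.succ)) a')) ∧
      ∀ a x a' (b : B), T (word a (update x (Fin.last n) (x (Fin.last n) * b)) a') =
        T (word a x (b * a')) := by
  constructor
  · refine fun hT => ⟨fun a x a' b => ?_, fun a x a' b i => ?_, fun a x a' b => ?_⟩
    · rw [← word_mul_mulSingle_zero, ← mulSingle_castSucc_succ_mul_word]
      exact hT _ 0 b
    · rw [← word_mul_mulSingle_castSucc_succ, ← mulSingle_castSucc_succ_mul_word]
      exact hT _ i.castSucc.succ b
    · rw [← word_mul_mulSingle_castSucc_succ, ← mulSingle_last_mul_word]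
      exact hT _ (Fin.last _) b
  · rintro ⟨h_zero, h_inner, h_last⟩ w i b
    obtain ⟨a, x, a', rfl⟩ := exists_eq_word w
    refine Fin.cases ?_ (fun i => Fin.lastCases ?_ (fun i => ?_) i) i
    · rw [Fin.castSucc_zero, word_mul_mulSingle_zero, h_zero,
        ← mulSingle_castSucc_succ_mul_word, Fin.castSucc_zero]
    · rw [← Fin.succ_castSucc, word_mul_mulSingle_castSucc_succ, h_last,
        ← mulSingle_last_mul_word, Fin.succ_last, Fin.succ_last]
    · rw [← Fin.succ_castSucc, word_mul_mulSingle_castSucc_succ, h_inner,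
        ← mulSingle_castSucc_succ_mul_word, Fin.castSucc_succ]

theorem IsNormalized.map_word_congr {T : MultilinearMap k (fun _ : Fin (n + 2) => A) X}
    (hT : IsNormalized B T) {x y : Fin n → A} (hxy : ∀ i, x i - y i ∈ B) (a a' : A) :
    T (word a x a') = T (word a y a') := by
  refine multilinear_congr_of_forall_sub T fun i z hz => ?_
  obtain rfl | hi_zero := eq_or_ne i 0
  · exact T.map_coord_zero 0 (hz.trans (sub_self a))
  obtain rfl | hi_last := eq_or_ne i (Fin.last _)
  · exact T.map_coord_zero (Fin.last _) (by rw [hz, word_last, word_last, sub_self])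
  obtain ⟨i, rfl⟩ := Fin.exists_succ_eq.2 hi_zero
  obtain ⟨i, rfl⟩ := Fin.exists_castSucc_eq.2 (fun h => hi_last (congrArg Fin.succ h))
  refine hT z _ hi_zero hi_last ?_
  rw [hz, word_castSucc_succ, word_castSucc_succ]
  exact hxy i

end Descent

section BarTerms

variable {k : Type} [Field k] {A : Type} [Ring A] [Algebra k A] {B : Subalgebra k A}
  {X : Type*} [AddCommGroup X] [Module k X]

variable (B) in
/-- The class of a word `(a, x₀, …, xₙ₋₁, a')` in the `n`-th bar term, that is, of the tensor
`a ⊗ π x₀ ⊗ ⋯ ⊗ π xₙ₋₁ ⊗ a'`. -/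
noncomputable def barWord : ∀ n, MultilinearMap k (fun _ : Fin (n + 2) => A) (BarC k A B n)
  | 0 => (mkBar0 k A B).compMultilinearMap pairTensor
  | n + 1 => LinearMap.compMultilinearMap
      (mkBar k A B n : A ⊗[k] ((⨂[k] (_ : Fin (n + 1)), QM k A B) ⊗[k] A) →ₗ[k] _)
      (wordTensor (πQ k A B) (n + 1))

theorem barWord_zero_word (a : A) (x : Fin 0 → A) (a' : A) :
    barWord B 0 (word a x a') = mkBar0 k A B (a ⊗ₜ[k] a') :=
  congrArg (mkBar0 k A B) (pairTensor_word a x a')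

theorem barWord_succ_word (n : ℕ) (a : A) (x : Fin (n + 1) → A) (a' : A) :
    barWord B (n + 1) (word a x a') =
      mkBar k A B n (a ⊗ₜ[k] (tprod k (πQ k A B ∘ x) ⊗ₜ[k] a')) :=
  congrArg (mkBar k A B n) (wordTensor_word (πQ k A B) a x a')

theorem πQ_comp_update_mul_left {n : ℕ} (x : Fin n → A) (i : Fin n) (b : B) :
    πQ k A B ∘ update x i (b * x i) =
      update (πQ k A B ∘ x) i (Ql k A B b ((πQ k A B ∘ x) i)) :=
  comp_update ..

theorem πQ_comp_update_mul_right {n : ℕ} (x : Fin n → A) (i : Fin n) (b : B) :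
    πQ k A B ∘ update x i (x i * b) =
      update (πQ k A B ∘ x) i (Qr k A B b ((πQ k A B ∘ x) i)) :=
  comp_update ..

theorem πQ_eq_zero_iff {x : A} : πQ k A B x = 0 ↔ x ∈ B :=
  Submodule.Quotient.mk_eq_zero (Subalgebra.toSubmodule B)

theorem isBalanced_barWord : ∀ n, IsBalanced B (barWord B n)
  | 0 => by
    refine isBalanced_iff_word_zero.2 fun a x a' b => ?_
    rw [barWord_zero_word, barWord_zero_word]
    exact (Submodule.Quotient.eq _).2 (Submodule.subset_span ⟨a, a', b, rfl⟩)
  | n + 1 => by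
    refine isBalanced_iff_word_succ.2
      ⟨fun a x a' b => ?_, fun a x a' b i => ?_, fun a x a' b => ?_⟩ <;>
    simp only [barWord_succ_word, πQ_comp_update_mul_left, πQ_comp_update_mul_right] <;>
    refine (Submodule.Quotient.eq _).2 (Submodule.subset_span ?_)
    · exact Or.inl (Or.inl ⟨a, a', _, b, rfl⟩)
    · exact Or.inl (Or.inr ⟨a, a', _, b, i, rfl⟩)
    · exact Or.inr ⟨a, a', _, b, rfl⟩

theorem isNormalized_barWord : ∀ n, IsNormalized B (barWord B n)
  | 0 => fun _ i h_zero h_last _ => absurd i.2 (by grind)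
  | n + 1 => by
    intro w i hi_zero hi_last hi
    obtain ⟨a, x, a', rfl⟩ := exists_eq_word w
    obtain ⟨i, rfl⟩ := Fin.exists_succ_eq.2 hi_zero
    obtain ⟨i, rfl⟩ := Fin.exists_castSucc_eq.2 (fun h => hi_last (congrArg Fin.succ h))
    rw [word_castSucc_succ] at hi
    rw [barWord_succ_word, MultilinearMap.map_coord_zero _ i (πQ_eq_zero_iff.2 hi),
      TensorProduct.zero_tmul, TensorProduct.tmul_zero]
    exact map_zero _

theorem barC_zero_hom_ext {f g : BarC k A B 0 →ₗ[k] X}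
    (h : ∀ a a', f (mkBar0 k A B (a ⊗ₜ[k] a')) = g (mkBar0 k A B (a ⊗ₜ[k] a'))) : f = g := by
  apply Submodule.linearMap_qext
  apply TensorProduct.ext
  ext a a'
  exact h a a'

theorem barC_succ_hom_ext {n : ℕ} {f g : BarC k A B (n + 1) →ₗ[k] X}
    (h : ∀ a α a', f (mkBar k A B n (a ⊗ₜ[k] (tprod k α ⊗ₜ[k] a'))) =
      g (mkBar k A B n (a ⊗ₜ[k] (tprod k α ⊗ₜ[k] a')))) : f = g := by
  apply Submodule.linearMap_qext
  apply TensorProduct.ext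
  ext a : 1
  apply TensorProduct.ext
  apply PiTensorProduct.ext
  ext α a'
  exact h a α a'

theorem exists_πQ_comp_eq {n : ℕ} (α : Fin n → QM k A B) : ∃ x, πQ k A B ∘ x = α :=
  (Submodule.mkQ_surjective (Subalgebra.toSubmodule B)).comp_left α

theorem barC_hom_ext : ∀ {n} {f g : BarC k A B n →ₗ[k] X},
    (∀ w, f (barWord B n w) = g (barWord B n w)) → f = g
  | 0, _, _, h => barC_zero_hom_ext fun a a' => h (word a finZeroElim a')
  | n + 1, _, _, h => barC_succ_hom_ext fun a α a' => by
    obtain ⟨x, rfl⟩ := exists_πQ_comp_eq α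
    rw [← barWord_succ_word, h]

theorem barRel0_le_ker_pairLift {T : MultilinearMap k (fun _ : Fin 2 => A) X}
    (hT : IsBalanced B T) : barRel0 k A B ≤ LinearMap.ker (pairLift T) := by
  refine Submodule.span_le.2 ?_
  rintro _ ⟨a, a', b, rfl⟩
  refine (map_sub (pairLift T) _ _).trans (sub_eq_zero.2 ?_)
  rw [pairLift_tmul _ _ finZeroElim, pairLift_tmul _ _ finZeroElim]
  exact isBalanced_iff_word_zero.1 hT a _ a' b

theorem wordLift_tmul_πQ {n : ℕ} {T : MultilinearMap k (fun _ : Fin (n + 2) => A) X}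
    (hT : IsNormalized B T) {s : QM k A B →ₗ[k] A} (hs : LeftInverse (πQ k A B) s)
    (a : A) (x : Fin n → A) (a' : A) :
    wordLift s T (a ⊗ₜ[k] (tprod k (πQ k A B ∘ x) ⊗ₜ[k] a')) = T (word a x a') := by
  rw [wordLift_tmul]
  refine hT.map_word_congr (fun i => πQ_eq_zero_iff.1 ?_) a a'
  rw [map_sub, sub_eq_zero]
  exact hs (πQ k A B (x i))

theorem barRel_le_ker_wordLift {n : ℕ} {T : MultilinearMap k (fun _ : Fin (n + 3) => A) X}
    (hbal : IsBalanced B T) (hnorm : IsNormalized B T) {s : QM k A B →ₗ[k] A}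
    (hs : LeftInverse (πQ k A B) s) :
    barRel k A B n ≤ LinearMap.ker (wordLift s T : barAmb k A B (n + 1) →ₗ[k] X) := by
  obtain ⟨h_zero, h_inner, h_last⟩ := isBalanced_iff_word_succ.1 hbal
  refine Submodule.span_le.2 ?_
  rintro _ ((⟨a, a', α, b, rfl⟩ | ⟨a, a', α, b, i, rfl⟩) | ⟨a, a', α, b, rfl⟩) <;>
  obtain ⟨x, rfl⟩ := exists_πQ_comp_eq α <;>
  refine (map_sub (wordLift s T) _ _).trans (sub_eq_zero.2 ?_) <;>
  simp only [← πQ_comp_update_mul_left, ← πQ_comp_update_mul_right, wordLift_tmul_πQ hnorm hs]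
  · exact h_zero a x a' b
  · exact h_inner a x a' b i
  · exact h_last a x a' b

theorem exists_lift_barWord : ∀ {n} {T : MultilinearMap k (fun _ : Fin (n + 2) => A) X},
    IsBalanced B T → IsNormalized B T →
      ∃ F : BarC k A B n →ₗ[k] X, ∀ w, F (barWord B n w) = T w
  | 0, T, hbal, _ => by
    refine ⟨(barRel0 k A B).liftQ (pairLift T) (barRel0_le_ker_pairLift hbal), fun w => ?_⟩
    obtain ⟨a, x, a', rfl⟩ := exists_eq_word w
    exact pairLift_tmul T a x a'
  | n + 1, T, hbal, hnorm => by
    obtain ⟨s, hs⟩ := (πQ k A B).exists_rightInverse_of_surjective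
      (Submodule.range_mkQ (Subalgebra.toSubmodule B))
    replace hs : LeftInverse (πQ k A B) s := LinearMap.congr_fun hs
    refine ⟨(barRel k A B n).liftQ _ (barRel_le_ker_wordLift hbal hnorm hs), fun w => ?_⟩
    obtain ⟨a, x, a', rfl⟩ := exists_eq_word w
    rw [barWord_succ_word]
    exact wordLift_tmul_πQ hnorm hs a x a'

/-- The linear map on the `n`-th bar term induced by a balanced normalized multilinear map; this
is the universal property of `barWord`. -/
noncomputable def barLift {n : ℕ} {T : MultilinearMap k (fun _ : Fin (n + 2) => A) X}
    (hbal : IsBalanced B T) (hnorm : IsNormalized B T) : BarC k A B n →ₗ[k] X :=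
  (exists_lift_barWord hbal hnorm).choose

theorem barLift_barWord {n : ℕ} {T : MultilinearMap k (fun _ : Fin (n + 2) => A) X}
    (hbal : IsBalanced B T) (hnorm : IsNormalized B T) (w : Fin (n + 2) → A) :
    barLift hbal hnorm (barWord B n w) = T w :=
  (exists_lift_barWord hbal hnorm).choose_spec w

variable (B) in
/-- The relative bar differential, defined on words in `A` and hence without choosing a section of
`π`. -/
noncomputable def barDiff (n : ℕ) : BarC k A B (n + 1) →ₗ[k] BarC k A B n :=
  barLift (isBalanced_barWord n).barCoboundary
    ((isNormalized_barWord n).barCoboundary (isBalanced_barWord n))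

theorem barDiff_barWord (n : ℕ) (w : Fin (n + 3) → A) :
    barDiff B n (barWord B (n + 1) w) =
      ∑ j : Fin (n + 2), (-1 : ℤ) ^ (j : ℕ) • barWord B n (mergeFun (· * ·) w j) :=
  (barLift_barWord _ _ w).trans (barCoboundary_apply _ w)

variable (B) in
/-- Left multiplication by `a` on the first tensor factor of the `n`-th bar term. -/
noncomputable def barLeftMul (a : A) (n : ℕ) : BarC k A B n →ₗ[k] BarC k A B n :=
  barLift ((isBalanced_barWord n).mulLeftArgs a) ((isNormalized_barWord n).mulLeftArgs a)

theorem barLeftMul_barWord (a : A) (n : ℕ) (w : Fin (n + 2) → A) :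
    barLeftMul B a n (barWord B n w) = barWord B n (Pi.mulSingle 0 a * w) :=
  barLift_barWord _ _ w

variable (B) in
/-- Right multiplication by `a` on the last tensor factor of the `n`-th bar term. -/
noncomputable def barRightMul (a : A) (n : ℕ) : BarC k A B n →ₗ[k] BarC k A B n :=
  barLift ((isBalanced_barWord n).mulRightArgs a) ((isNormalized_barWord n).mulRightArgs a)

theorem barRightMul_barWord (a : A) (n : ℕ) (w : Fin (n + 2) → A) :
    barRightMul B a n (barWord B n w) = barWord B n (w * Pi.mulSingle (Fin.last (n + 1)) a) :=
  barLift_barWord _ _ w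

theorem barDiff_comp_barLeftMul (a : A) (n : ℕ) :
    barDiff B n ∘ₗ barLeftMul B a (n + 1) = barLeftMul B a n ∘ₗ barDiff B n := by
  refine barC_hom_ext fun w => ?_
  have merge (j : Fin (n + 2)) : mergeFun (· * ·) (Pi.mulSingle 0 a * w) j =
      Pi.mulSingle 0 a * mergeFun (· * ·) w j := by
    rw [mergeFun_mulSingle_mul _ (Fin.succ_ne_zero j).symm, Fin.predAbove_right_zero]
  simp only [LinearMap.comp_apply, barLeftMul_barWord, barDiff_barWord, map_sum, map_zsmul, merge]

theorem barDiff_comp_barRightMul (a : A) (n : ℕ) :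
    barDiff B n ∘ₗ barRightMul B a (n + 1) = barRightMul B a n ∘ₗ barDiff B n := by
  refine barC_hom_ext fun w => ?_
  have merge (j : Fin (n + 2)) : mergeFun (· * ·) (w * Pi.mulSingle (Fin.last (n + 2)) a) j =
      mergeFun (· * ·) w j * Pi.mulSingle (Fin.last (n + 1)) a := by
    rw [mergeFun_mul_mulSingle _ (Fin.castSucc_ne_last j).symm, Fin.predAbove_right_last]
  simp only [LinearMap.comp_apply, barRightMul_barWord, barDiff_barWord, map_sum, map_zsmul, merge]

end BarTerms

section Formulas

variable {k : Type} [Field k] {A : Type} [Ring A] [Algebra k A] {B : Subalgebra k A}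

theorem isBarLeftAct_barLeftMul : IsBarLeftAct k A B (barLeftMul B) := by
  refine ⟨fun a a₀ a' => ?_, fun a n a₀ α a' => ?_⟩
  · rw [← barWord_zero_word _ finZeroElim, barLeftMul_barWord, mulSingle_zero_mul_word,
      barWord_zero_word]
  · obtain ⟨x, rfl⟩ := exists_πQ_comp_eq α
    rw [← barWord_succ_word, barLeftMul_barWord, mulSingle_zero_mul_word, barWord_succ_word]

theorem isBarRightAct_barRightMul : IsBarRightAct k A B (barRightMul B) := by
  refine ⟨fun a a₀ a' => ?_, fun a n a₀ α a' => ?_⟩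
  · rw [← barWord_zero_word _ finZeroElim, barRightMul_barWord, word_mul_mulSingle_last,
      barWord_zero_word]
  · obtain ⟨x, rfl⟩ := exists_πQ_comp_eq α
    rw [← barWord_succ_word, barRightMul_barWord, word_mul_mulSingle_last, barWord_succ_word]

theorem IsBarLeftAct.unique {L L' : ∀ (_ : A) (n : ℕ), BarC k A B n →ₗ[k] BarC k A B n}
    (hL : IsBarLeftAct k A B L) (hL' : IsBarLeftAct k A B L') : L = L' := by
  funext a n
  cases n with
  | zero => exact barC_zero_hom_ext fun a₀ a' => by rw [hL.1, hL'.1]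
  | succ n => exact barC_succ_hom_ext fun a₀ α a' => by rw [hL.2, hL'.2]

theorem IsBarRightAct.unique {R R' : ∀ (_ : A) (n : ℕ), BarC k A B n →ₗ[k] BarC k A B n}
    (hR : IsBarRightAct k A B R) (hR' : IsBarRightAct k A B R') : R = R' := by
  funext a n
  cases n with
  | zero => exact barC_zero_hom_ext fun a₀ a' => by rw [hR.1, hR'.1]
  | succ n => exact barC_succ_hom_ext fun a₀ α a' => by rw [hR.2, hR'.2]

theorem IsBarDiff.unique {σ : QM k A B →ₗ[k] A}
    {d d' : ∀ n, BarC k A B (n + 1) →ₗ[k] BarC k A B n}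
    (hd : IsBarDiff k A B σ d) (hd' : IsBarDiff k A B σ d') : d = d' := by
  funext n
  cases n with
  | zero => exact barC_succ_hom_ext fun a α a' => by rw [hd.1, hd'.1]
  | succ n => exact barC_succ_hom_ext fun a α a' => by rw [hd.2, hd'.2]

theorem barWord_succ_word_comp {σ : QM k A B →ₗ[k] A} (hσ : LeftInverse (πQ k A B) σ) (n : ℕ)
    (a : A) (α : Fin (n + 1) → QM k A B) (a' : A) :
    barWord B (n + 1) (word a (σ ∘ α) a') = mkBar k A B n (a ⊗ₜ[k] (tprod k α ⊗ₜ[k] a')) := by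
  rw [barWord_succ_word, ← comp_assoc, hσ.comp_eq_id, id_comp]

theorem mkBar0_barZero (σ : QM k A B →ₗ[k] A) (a : A) (α : Fin 1 → QM k A B) (a' : A) :
    mkBar0 k A B (barZero k A B σ a α a') =
      ∑ j : Fin 2, (-1 : ℤ) ^ (j : ℕ) •
        barWord B 0 (mergeFun (· * ·) (word a (σ ∘ α) a') j) := by
  have last : mergeFun (· * ·) (word a (σ ∘ α) a') 1 = _ := mergeFun_word_last ..
  rw [barZero, map_sub, Fin.sum_univ_two, mergeFun_word_zero, last, barWord_zero_word,
    barWord_zero_word, Fin.val_zero, Fin.val_one, pow_zero, pow_one, one_zsmul, neg_one_zsmul,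
    ← sub_eq_add_neg]
  rfl

theorem mkBar_barSucc {σ : QM k A B →ₗ[k] A} (hσ : LeftInverse (πQ k A B) σ) (n : ℕ) (a : A)
    (α : Fin (n + 2) → QM k A B) (a' : A) :
    mkBar k A B n (barSucc k A B σ n a α a') =
      ∑ j : Fin (n + 3), (-1 : ℤ) ^ (j : ℕ) •
        barWord B (n + 1) (mergeFun (· * ·) (word a (σ ∘ α) a') j) := by
  let classMap : A ⊗[k] ((⨂[k] (_ : Fin (n + 1)), QM k A B) ⊗[k] A) →ₗ[k] BarC k A B (n + 1) :=
    mkBar k A B n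
  have first : barWord B (n + 1) (mergeFun (· * ·) (word a (σ ∘ α) a') 0) =
      classMap ((a * σ (α 0)) ⊗ₜ[k] ((tprod k fun i => α i.succ) ⊗ₜ[k] a')) := by
    rw [mergeFun_word_zero]
    exact barWord_succ_word_comp hσ n _ (Fin.tail α) a'
  have inner (j : Fin (n + 1)) :
      barWord B (n + 1) (mergeFun (· * ·) (word a (σ ∘ α) a') j.castSucc.succ) =
        classMap (a ⊗ₜ[k]
          ((tprod k (mergeFun (fun y z => πQ k A B (σ y * σ z)) α j)) ⊗ₜ[k] a')) := by
    rw [mergeFun_word_castSucc_succ, barWord_succ_word, comp_mergeFun_comp hσ]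
    rfl
  have last : barWord B (n + 1) (mergeFun (· * ·) (word a (σ ∘ α) a') (Fin.last (n + 2))) =
      classMap (a ⊗ₜ[k] ((tprod k fun i => α i.castSucc) ⊗ₜ[k]
        (σ (α (Fin.last (n + 1))) * a'))) := by
    rw [mergeFun_word_last]
    exact barWord_succ_word_comp hσ n _ (Fin.init α) _
  change classMap (_ + ∑ j, _ + _) = _
  simp only [Fin.sum_univ_succ (n := n + 2), Fin.sum_univ_castSucc, Fin.succ_last, first, inner,
    last, map_add, map_sum, map_zsmul, Fin.val_zero, Fin.val_succ, Fin.val_castSucc, Fin.val_last,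
    pow_zero, one_zsmul, add_assoc]

theorem isBarDiff_barDiff {σ : QM k A B →ₗ[k] A} (hσ : LeftInverse (πQ k A B) σ) :
    IsBarDiff k A B σ (barDiff B) :=
  ⟨fun a α a' => by rw [mkBar0_barZero, ← barDiff_barWord, barWord_succ_word_comp hσ],
    fun n a α a' => by rw [mkBar_barSucc hσ, ← barDiff_barWord, barWord_succ_word_comp hσ]⟩

end Formulas

end JZH

/-- For an extension `B ⊆ A` of `k`-algebras and any `k`-linear section `σ` of
`π : A → A/B`, the relative bar differential formula descends through the tensor products over
`B` to well-defined maps `d : A ⊗_B (A/B)^{⊗_B (n−1)} ⊗_B A → A ⊗_B (A/B)^{⊗_B (n−2)} ⊗_B A`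
(for every `n ≥ 2`), and the resulting maps are morphisms of `A`-bimodules, where the
`A`-bimodule structure is by outer multiplication (which also descends). -/
theorem relative_bar_differential_well_defined_and_bimodule_morphism
    (k : Type) [Field k] (A : Type) [Ring A] [Algebra k A] (B : Subalgebra k A)
    (σ : JZH.QM k A B →ₗ[k] A) (hσ : (JZH.πQ k A B).comp σ = LinearMap.id) :
    -- the differential formula induces well-defined maps:
    (∃ d : ∀ n, JZH.BarC k A B (n+1) →ₗ[k] JZH.BarC k A B n, JZH.IsBarDiff k A B σ d) ∧
    -- the outer `A`-bimodule actions are well defined: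
    (∃ L, JZH.IsBarLeftAct k A B L) ∧ (∃ R, JZH.IsBarRightAct k A B R) ∧
    -- any family of maps given by the formula is a morphism of `A`-bimodules:
    (∀ (d : ∀ n, JZH.BarC k A B (n+1) →ₗ[k] JZH.BarC k A B n)
       (L R : ∀ (_ : A) (n : ℕ), JZH.BarC k A B n →ₗ[k] JZH.BarC k A B n),
      JZH.IsBarDiff k A B σ d → JZH.IsBarLeftAct k A B L → JZH.IsBarRightAct k A B R →
      ∀ (a : A) (n : ℕ),
        (d n).comp (L a (n+1)) = (L a n).comp (d n) ∧
        (d n).comp (R a (n+1)) = (R a n).comp (d n)) := by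
  have hd := JZH.isBarDiff_barDiff (LinearMap.congr_fun hσ)
  have hL := JZH.isBarLeftAct_barLeftMul (B := B)
  have hR := JZH.isBarRightAct_barRightMul (B := B)
  refine ⟨⟨_, hd⟩, ⟨_, hL⟩, ⟨_, hR⟩, fun d L R hd' hL' hR' a n => ?_⟩
  obtain rfl := hd'.unique hd
  obtain rfl := hL'.unique hL
  obtain rfl := hR'.unique hR
  exact ⟨JZH.barDiff_comp_barLeftMul a n, JZH.barDiff_comp_barRightMul a n⟩
end

section
/- Let B ⊆ A be an extension of finite-dimensional k-algebras and X a finite-dimensional A-bimodule. Then in degree 1 the Jacobi-Zariski long nearly exact sequence is exact and ends surjectively: the map K : H_1(A,X) → H_1(A|B,X) is surjective and Ker K = Im(I : H_1(B,X) → H_1(A,X)). -/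
open scoped TensorProduct
open MulOpposite PiTensorProduct

namespace JZH

variable (k : Type) [Field k]
variable (A : Type) [Ring A] [Algebra k A] (B : Subalgebra k A)
variable (X : Type) [AddCommGroup X] [Module k X]
  [Module A X] [Module Aᵐᵒᵖ X] [SMulCommClass A Aᵐᵒᵖ X]
  [IsScalarTower k A X] [IsScalarTower k Aᵐᵒᵖ X]

/-- Degree-`n` term of the Hochschild chain complex of `A` with coefficients in `X`. -/
def CH : ℕ → Type
  | 0 => X
  | n + 1 => X ⊗[k] (⨂[k] (_ : Fin (n+1)), A)

noncomputable instance CHacg : ∀ n, AddCommGroup (CH k A X n)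
  | 0 => inferInstanceAs (AddCommGroup X)
  | n + 1 => inferInstanceAs (AddCommGroup (X ⊗[k] (⨂[k] (_ : Fin (n+1)), A)))

noncomputable instance CHmod : ∀ n, Module k (CH k A X n)
  | 0 => inferInstanceAs (Module k X)
  | n + 1 => inferInstanceAs (Module k (X ⊗[k] (⨂[k] (_ : Fin (n+1)), A)))

/-- The Hochschild boundary formula in lowest degree: `b(x ⊗ a) = x·a − a·x`. -/
def hochZero (x : X) (a : Fin 1 → A) : CH k A X 0 :=
  (op (a 0) • x) - (a 0 • x)

/-- The Hochschild boundary formula on elementary tensors,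
`b(x ⊗ a₁ ⊗ ⋯ ⊗ a_{n+2}) = x·a₁ ⊗ a₂ ⊗ ⋯ + Σ (−1)^i x ⊗ ⋯ ⊗ a_i a_{i+1} ⊗ ⋯ +
(−1)^{n+2} a_{n+2}·x ⊗ a₁ ⊗ ⋯ ⊗ a_{n+1}`. -/
noncomputable def hochSucc (n : ℕ) (x : X) (a : Fin (n+2) → A) : CH k A X (n+1) :=
  (op (a 0) • x) ⊗ₜ[k] (tprod k fun i : Fin (n+1) => a i.succ)
  + ∑ j : Fin (n+1), ((-1 : ℤ) ^ ((j : ℕ) + 1)) •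
      (x ⊗ₜ[k] (tprod k (mergeFun (fun y z => y * z) a j)))
  + ((-1 : ℤ) ^ (n + 2)) •
      ((a (Fin.last (n+1)) • x) ⊗ₜ[k] (tprod k fun i : Fin (n+1) => a i.castSucc))

/-- `d` is the family of Hochschild differentials of `A` with coefficients in `X`. -/
def IsHochschildDiff (d : ∀ n, CH k A X (n+1) →ₗ[k] CH k A X n) : Prop :=
  (∀ (x : X) (a : Fin 1 → A), d 0 (x ⊗ₜ[k] tprod k a) = hochZero k A X x a) ∧
  (∀ (n : ℕ) (x : X) (a : Fin (n+2) → A),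
    d (n+1) (x ⊗ₜ[k] tprod k a) = hochSucc k A X n x a)

/-- Degree-`n` term of the Hochschild chain complex of the subalgebra `B` with
coefficients in `X`. -/
def CHB : ℕ → Type
  | 0 => X
  | n + 1 => X ⊗[k] (⨂[k] (_ : Fin (n+1)), B)

noncomputable instance CHBacg : ∀ n, AddCommGroup (CHB k A B X n)
  | 0 => inferInstanceAs (AddCommGroup X)
  | n + 1 => inferInstanceAs (AddCommGroup (X ⊗[k] (⨂[k] (_ : Fin (n+1)), B)))

noncomputable instance CHBmod : ∀ n, Module k (CHB k A B X n)
  | 0 => inferInstanceAs (Module k X)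
  | n + 1 => inferInstanceAs (Module k (X ⊗[k] (⨂[k] (_ : Fin (n+1)), B)))

/-- Hochschild boundary formula for `B`, lowest degree. -/
def hochBZero (x : X) (b : Fin 1 → B) : CHB k A B X 0 :=
  (op ((b 0 : A)) • x) - ((b 0 : A) • x)

/-- Hochschild boundary formula for `B` on elementary tensors. -/
noncomputable def hochBSucc (n : ℕ) (x : X) (b : Fin (n+2) → B) : CHB k A B X (n+1) :=
  (op ((b 0 : A)) • x) ⊗ₜ[k] (tprod k fun i : Fin (n+1) => b i.succ)
  + ∑ j : Fin (n+1), ((-1 : ℤ) ^ ((j : ℕ) + 1)) •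
      (x ⊗ₜ[k] (tprod k (mergeFun (fun y z => y * z) b j)))
  + ((-1 : ℤ) ^ (n + 2)) •
      (((b (Fin.last (n+1)) : A) • x) ⊗ₜ[k] (tprod k fun i : Fin (n+1) => b i.castSucc))

/-- `d` is the family of Hochschild differentials of `B` with coefficients in `X`. -/
def IsHochschildDiffB (d : ∀ n, CHB k A B X (n+1) →ₗ[k] CHB k A B X n) : Prop :=
  (∀ (x : X) (b : Fin 1 → B), d 0 (x ⊗ₜ[k] tprod k b) = hochBZero k A B X x b) ∧
  (∀ (n : ℕ) (x : X) (b : Fin (n+2) → B),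
    d (n+1) (x ⊗ₜ[k] tprod k b) = hochBSucc k A B X n x b)

/-- The subspace of `X` spanned by the commutators `b·x − x·b`, `b ∈ B`;
the quotient is `X_B`. -/
def commRel : Submodule k X :=
  Submodule.span k {z : X | ∃ (b : B) (x : X), z = (b : A) • x - op (b : A) • x}

/-- The balancing relations defining `X ⊗_{Bᵉ} (A/B)^{⊗_B (n+1)}` inside
`X ⊗[k] (A/B)^{⊗[k] (n+1)}`. -/
def relRel (n : ℕ) : Submodule k (X ⊗[k] (⨂[k] (_ : Fin (n+1)), QM k A B)) :=
  Submodule.span k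
    ({z | ∃ (x : X) (α : Fin (n+1) → QM k A B) (b : B),
        z = (op (b : A) • x) ⊗ₜ[k] tprod k α
            - x ⊗ₜ[k] tprod k (Function.update α 0 (Ql k A B b (α 0)))} ∪
     {z | ∃ (x : X) (α : Fin (n+1) → QM k A B) (b : B) (i : Fin n),
        z = x ⊗ₜ[k] tprod k (Function.update α i.castSucc (Qr k A B b (α i.castSucc)))
            - x ⊗ₜ[k] tprod k (Function.update α i.succ (Ql k A B b (α i.succ)))} ∪
     {z | ∃ (x : X) (α : Fin (n+1) → QM k A B) (b : B),
        z = x ⊗ₜ[k] tprod k (Function.update α (Fin.last n) (Qr k A B b (α (Fin.last n))))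
            - ((b : A) • x) ⊗ₜ[k] tprod k α})

/-- Degree-`n` term of the relative Hochschild chain complex `C_*(A|B,X)`:
`X_B` in degree `0` and `X ⊗_{Bᵉ} (A/B)^{⊗_B n}` in degree `n ≥ 1`. -/
def RC : ℕ → Type
  | 0 => X ⧸ commRel k A B X
  | n + 1 => (X ⊗[k] (⨂[k] (_ : Fin (n+1)), QM k A B)) ⧸ relRel k A B X n

noncomputable instance RCacg : ∀ n, AddCommGroup (RC k A B X n)
  | 0 => inferInstanceAs (AddCommGroup (_ ⧸ _))
  | n + 1 => inferInstanceAs (AddCommGroup (_ ⧸ _))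

noncomputable instance RCmod : ∀ n, Module k (RC k A B X n)
  | 0 => inferInstanceAs (Module k (_ ⧸ _))
  | n + 1 => inferInstanceAs (Module k (_ ⧸ _))

/-- Class of an element of `X ⊗[k] (A/B)^{⊗ (n+1)}` in the relative chain module. -/
noncomputable def mkRC (n : ℕ) :
    (X ⊗[k] (⨂[k] (_ : Fin (n+1)), QM k A B)) →ₗ[k] RC k A B X (n+1) :=
  (relRel k A B X n).mkQ

/-- Class of an element of `X` in `X_B`. -/
noncomputable def mkXB : X →ₗ[k] RC k A B X 0 := (commRel k A B X).mkQ

variable (σ : QM k A B →ₗ[k] A)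

/-- Relative Hochschild boundary formula, lowest degree:
`b(x ⊗ α) = x·σ(α) − σ(α)·x` (with values in `X`, before passing to `X_B`). -/
def relZero (x : X) (α : Fin 1 → QM k A B) : X :=
  (op (σ (α 0)) • x) - (σ (α 0) • x)

/-- Relative Hochschild boundary formula on elementary tensors (values in
`X ⊗[k] (A/B)^{⊗(n+1)}`, before passing to the quotient). -/
noncomputable def relSucc (n : ℕ) (x : X) (α : Fin (n+2) → QM k A B) :
    X ⊗[k] (⨂[k] (_ : Fin (n+1)), QM k A B) :=
  (op (σ (α 0)) • x) ⊗ₜ[k] (tprod k fun i : Fin (n+1) => α i.succ)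
  + ∑ j : Fin (n+1), ((-1 : ℤ) ^ ((j : ℕ) + 1)) •
      (x ⊗ₜ[k] (tprod k (mergeFun (fun y z => πQ k A B (σ y * σ z)) α j)))
  + ((-1 : ℤ) ^ (n + 2)) •
      ((σ (α (Fin.last (n+1))) • x) ⊗ₜ[k] (tprod k fun i : Fin (n+1) => α i.castSucc))

/-- `d` is the family of relative Hochschild differentials, for the section `σ`. -/
def IsRelDiff (d : ∀ n, RC k A B X (n+1) →ₗ[k] RC k A B X n) : Prop :=
  (∀ (x : X) (α : Fin 1 → QM k A B),
    d 0 (mkRC k A B X 0 (x ⊗ₜ[k] tprod k α)) = mkXB k A B X (relZero k A B X σ x α)) ∧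
  (∀ (n : ℕ) (x : X) (α : Fin (n+2) → QM k A B),
    d (n+1) (mkRC k A B X (n+1) (x ⊗ₜ[k] tprod k α)) =
      mkRC k A B X n (relSucc k A B X σ n x α))

/-- The chain map `κ : C_*(A,X) → C_*(A|B,X)` induced by `π`. -/
noncomputable def κmap : ∀ n, CH k A X n →ₗ[k] RC k A B X n
  | 0 => mkXB k A B X
  | n + 1 => (mkRC k A B X n).comp
      (TensorProduct.map LinearMap.id (PiTensorProduct.map fun _ => πQ k A B))

/-- The chain map `ι : C_*(B,X) → C_*(A,X)` induced by the inclusion `B ⊆ A`. -/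
noncomputable def ιmap : ∀ n, CHB k A B X n →ₗ[k] CH k A X n
  | 0 => LinearMap.id
  | n + 1 => TensorProduct.map LinearMap.id (PiTensorProduct.map fun _ => B.val.toLinearMap)

end JZH

namespace JZ

variable (k : Type) [Field k]
variable (C : ℕ → Type) [∀ n, AddCommGroup (C n)] [∀ n, Module k (C n)]
variable (D : ℕ → Type) [∀ n, AddCommGroup (D n)] [∀ n, Module k (D n)]

/-- Homology in degree `n+1` of a (raw) nonnegatively graded chain complex given by its
differentials `d n : C (n+1) →ₗ[k] C n`. -/
def homologySucc (d : ∀ n, C (n+1) →ₗ[k] C n) (n : ℕ) : Type :=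
  LinearMap.ker (d n) ⧸
    (LinearMap.range (d (n+1))).comap (LinearMap.ker (d n)).subtype

instance homologySuccAddCommGroup (d : ∀ n, C (n+1) →ₗ[k] C n) (n : ℕ) :
    AddCommGroup (homologySucc k C d n) :=
  inferInstanceAs (AddCommGroup (_ ⧸ _))

instance homologySuccModule (d : ∀ n, C (n+1) →ₗ[k] C n) (n : ℕ) :
    Module k (homologySucc k C d n) :=
  inferInstanceAs (Module k (_ ⧸ _))

/-- Homology in degree `0`. -/
def homologyZero (d : ∀ n, C (n+1) →ₗ[k] C n) : Type :=
  C 0 ⧸ LinearMap.range (d 0)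

instance homologyZeroAddCommGroup (d : ∀ n, C (n+1) →ₗ[k] C n) :
    AddCommGroup (homologyZero k C d) := inferInstanceAs (AddCommGroup (_ ⧸ _))

instance homologyZeroModule (d : ∀ n, C (n+1) →ₗ[k] C n) :
    Module k (homologyZero k C d) := inferInstanceAs (Module k (_ ⧸ _))

/-- Homology in every degree. -/
def homology (d : ∀ n, C (n+1) →ₗ[k] C n) : ℕ → Type
  | 0 => homologyZero k C d
  | n+1 => homologySucc k C d n

instance homologyAddCommGroup (d : ∀ n, C (n+1) →ₗ[k] C n) (n : ℕ) :
    AddCommGroup (homology k C d n) := by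
  cases n with
  | zero => exact inferInstanceAs (AddCommGroup (homologyZero k C d))
  | succ n => exact inferInstanceAs (AddCommGroup (homologySucc k C d n))

instance homologyModule (d : ∀ n, C (n+1) →ₗ[k] C n) (n : ℕ) :
    Module k (homology k C d n) := by
  cases n with
  | zero => exact inferInstanceAs (Module k (homologyZero k C d))
  | succ n => exact inferInstanceAs (Module k (homologySucc k C d n))

variable {k C D}

/-- The map induced in positive-degree homology by a chain map. -/
noncomputable def inducedSucc (dC : ∀ n, C (n+1) →ₗ[k] C n) (dD : ∀ n, D (n+1) →ₗ[k] D n)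
    (f : ∀ n, C n →ₗ[k] D n)
    (hsq : ∀ n, (dD n).comp (f (n+1)) = (f n).comp (dC n)) (n : ℕ) :
    homologySucc k C dC n →ₗ[k] homologySucc k D dD n :=
  Submodule.mapQ _ _
    ((f (n+1)).restrict (p := LinearMap.ker (dC n)) (q := LinearMap.ker (dD n))
      (fun x hx => by
        have := congrArg (fun g => g x) (hsq n)
        simp only [LinearMap.comp_apply] at this
        simp only [LinearMap.mem_ker] at hx ⊢
        rw [this, hx, map_zero]))
    (by
      rintro ⟨x, hxk⟩ hx
      simp only [Submodule.mem_comap, LinearMap.mem_range, Submodule.coe_subtype] at hx ⊢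
      obtain ⟨y, hy⟩ := hx
      refine ⟨f (n+2) y, ?_⟩
      have := congrArg (fun g => g y) (hsq (n+1))
      simp only [LinearMap.comp_apply] at this
      simp only [LinearMap.restrict_coe_apply]
      rw [this, hy])

/-- The map induced in degree-0 homology by a chain map. -/
noncomputable def inducedZero (dC : ∀ n, C (n+1) →ₗ[k] C n) (dD : ∀ n, D (n+1) →ₗ[k] D n)
    (f : ∀ n, C n →ₗ[k] D n)
    (hsq : ∀ n, (dD n).comp (f (n+1)) = (f n).comp (dC n)) :
    homologyZero k C dC →ₗ[k] homologyZero k D dD :=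
  Submodule.mapQ _ _ (f 0)
    (by
      rintro x ⟨y, rfl⟩
      have := congrArg (fun g => g y) (hsq 0)
      simp only [LinearMap.comp_apply] at this
      exact ⟨f 1 y, this⟩)

/-- The map induced in homology by a chain map, in every degree. -/
noncomputable def induced (dC : ∀ n, C (n+1) →ₗ[k] C n) (dD : ∀ n, D (n+1) →ₗ[k] D n)
    (f : ∀ n, C n →ₗ[k] D n)
    (hsq : ∀ n, (dD n).comp (f (n+1)) = (f n).comp (dC n)) :
    ∀ n, homology k C dC n →ₗ[k] homology k D dD n
  | 0 => inducedZero dC dD f hsq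
  | n+1 => inducedSucc dC dD f hsq n

end JZ

/-!
In degree one, writing `κ = p ∘ (id ⊗ π)` with `p` the passage to `- ⊗_{Bᵉ} -`, exactness of
`X ⊗ B → X ⊗ A → X ⊗ A/B → 0` identifies `ker (id ⊗ π)` with the image of `X ⊗ B`. As `π` kills
`B`, the image under `id ⊗ π` of a boundary `b(x ⊗ b ⊗ a)` or `b(x ⊗ a ⊗ b)` with `b ∈ B` is a
balancing relation up to sign, and all relations arise in this way. Hence every element of
`ker κ` is a chain of `B` plus a boundary, which is what exactness at `H_1(A,X)` requires.
Surjectivity of `K` holds because the commutators defining `X_B` are exactly the boundaries of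
`1`-chains of `B`: a lift to `X ⊗ A` of a relative cycle becomes a cycle after subtracting a chain
of `B`, which `κ` does not see.
-/

namespace JZ

section CycleClass

variable {k : Type} [Field k]
variable {C : ℕ → Type} [∀ n, AddCommGroup (C n)] [∀ n, Module k (C n)]
variable {D : ℕ → Type} [∀ n, AddCommGroup (D n)] [∀ n, Module k (D n)]

/-- The homology class of a cycle in positive degree. -/
def cycleClass (d : ∀ n, C (n + 1) →ₗ[k] C n) (n : ℕ) :
    LinearMap.ker (d n) →ₗ[k] homologySucc k C d n :=
  ((LinearMap.range (d (n + 1))).comap (LinearMap.ker (d n)).subtype).mkQ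

theorem cycleClass_surjective (d : ∀ n, C (n + 1) →ₗ[k] C n) (n : ℕ) :
    Function.Surjective (cycleClass d n) :=
  Submodule.mkQ_surjective _

theorem cycleClass_eq_zero_iff (d : ∀ n, C (n + 1) →ₗ[k] C n) (n : ℕ) (z : LinearMap.ker (d n)) :
    cycleClass d n z = 0 ↔ (z : C (n + 1)) ∈ LinearMap.range (d (n + 1)) :=
  Submodule.Quotient.mk_eq_zero _

variable {dC : ∀ n, C (n + 1) →ₗ[k] C n} {dD : ∀ n, D (n + 1) →ₗ[k] D n} {f : ∀ n, C n →ₗ[k] D n}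

theorem map_mem_ker (hf : ∀ n, (dD n).comp (f (n + 1)) = (f n).comp (dC n)) {n : ℕ} {z : C (n + 1)}
    (hz : z ∈ LinearMap.ker (dC n)) : f (n + 1) z ∈ LinearMap.ker (dD n) := by
  rw [LinearMap.mem_ker] at hz ⊢
  rw [← LinearMap.comp_apply, hf, LinearMap.comp_apply, hz, map_zero]

theorem inducedSucc_cycleClass (hf : ∀ n, (dD n).comp (f (n + 1)) = (f n).comp (dC n)) (n : ℕ)
    (z : LinearMap.ker (dC n)) :
    inducedSucc dC dD f hf n (cycleClass dC n z) =
      cycleClass dD n ⟨f (n + 1) z, map_mem_ker hf z.2⟩ :=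
  rfl

end CycleClass

section TwoChainMaps

variable {k : Type} [Field k]
variable {C : ℕ → Type} [∀ n, AddCommGroup (C n)] [∀ n, Module k (C n)]
variable {D : ℕ → Type} [∀ n, AddCommGroup (D n)] [∀ n, Module k (D n)]
variable {E : ℕ → Type} [∀ n, AddCommGroup (E n)] [∀ n, Module k (E n)]
variable {dC : ∀ n, C (n + 1) →ₗ[k] C n} {dD : ∀ n, D (n + 1) →ₗ[k] D n}
  {dE : ∀ n, E (n + 1) →ₗ[k] E n} {f : ∀ n, C n →ₗ[k] D n} {g : ∀ n, D n →ₗ[k] E n}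

theorem inducedSucc_surjective_of_ker_le
    (hf : ∀ n, (dD n).comp (f (n + 1)) = (f n).comp (dC n))
    (hg : ∀ n, (dE n).comp (g (n + 1)) = (g n).comp (dD n)) {n : ℕ}
    (hgf : (g (n + 1)).comp (f (n + 1)) = 0) (hsurj : Function.Surjective (g (n + 1)))
    (hker : LinearMap.ker (g n) ≤ (LinearMap.range (dC n)).map (f n)) :
    Function.Surjective (inducedSucc dD dE g hg n) := by
  intro ζ
  obtain ⟨⟨z, hz⟩, rfl⟩ := cycleClass_surjective dE n ζ
  obtain ⟨w, rfl⟩ := hsurj z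
  have hdw : dD n w ∈ LinearMap.ker (g n) := by
    rw [LinearMap.mem_ker, ← LinearMap.comp_apply, ← hg]
    exact hz
  obtain ⟨_, ⟨u, rfl⟩, hu⟩ := hker hdw
  have hcycle : w - f (n + 1) u ∈ LinearMap.ker (dD n) := by
    rw [LinearMap.mem_ker, map_sub, ← LinearMap.comp_apply (dD n) (f (n + 1)), hf,
      LinearMap.comp_apply, hu, sub_self]
  have himage : g (n + 1) (w - f (n + 1) u) = g (n + 1) w := by
    rw [map_sub, ← LinearMap.comp_apply, hgf, LinearMap.zero_apply, sub_zero]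
  refine ⟨cycleClass dD n ⟨_, hcycle⟩, ?_⟩
  simp only [inducedSucc_cycleClass, himage]

theorem range_inducedSucc_le_ker
    (hf : ∀ n, (dD n).comp (f (n + 1)) = (f n).comp (dC n))
    (hg : ∀ n, (dE n).comp (g (n + 1)) = (g n).comp (dD n)) {n : ℕ}
    (hgf : (g (n + 1)).comp (f (n + 1)) = 0) :
    LinearMap.range (inducedSucc dC dD f hf n) ≤ LinearMap.ker (inducedSucc dD dE g hg n) := by
  rintro _ ⟨ζ, rfl⟩
  obtain ⟨z, rfl⟩ := cycleClass_surjective dC n ζ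
  rw [LinearMap.mem_ker, inducedSucc_cycleClass, inducedSucc_cycleClass, cycleClass_eq_zero_iff]
  exact ⟨0, (map_zero _).trans (LinearMap.congr_fun hgf z).symm⟩

theorem ker_inducedSucc_le_range
    (hf : ∀ n, (dD n).comp (f (n + 1)) = (f n).comp (dC n))
    (hg : ∀ n, (dE n).comp (g (n + 1)) = (g n).comp (dD n)) {n : ℕ}
    (hd : (dD n).comp (dD (n + 1)) = 0) (hinj : Function.Injective (f n))
    (hsurj : Function.Surjective (g (n + 2)))
    (hker : LinearMap.ker (g (n + 1)) ≤
      LinearMap.range (f (n + 1)) ⊔ LinearMap.range (dD (n + 1))) :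
    LinearMap.ker (inducedSucc dD dE g hg n) ≤ LinearMap.range (inducedSucc dC dD f hf n) := by
  intro ζ hζ
  obtain ⟨⟨w, hw⟩, rfl⟩ := cycleClass_surjective dD n ζ
  rw [LinearMap.mem_ker, inducedSucc_cycleClass, cycleClass_eq_zero_iff] at hζ
  obtain ⟨v, hv⟩ := hζ
  obtain ⟨y, rfl⟩ := hsurj v
  have hdiff : w - dD (n + 1) y ∈ LinearMap.ker (g (n + 1)) := by
    rw [LinearMap.mem_ker, map_sub, sub_eq_zero, ← LinearMap.comp_apply, ← hg]
    exact hv.symm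
  obtain ⟨_, ⟨u, rfl⟩, _, ⟨t, rfl⟩, hut⟩ := Submodule.mem_sup.1 (hker hdiff)
  have hfu : f (n + 1) u = w - dD (n + 1) (y + t) := by
    rw [map_add, ← sub_sub, ← hut, add_sub_cancel_right]
  have hu : u ∈ LinearMap.ker (dC n) := by
    refine hinj ?_
    rw [← LinearMap.comp_apply, ← hf, LinearMap.comp_apply, hfu, map_sub, LinearMap.mem_ker.1 hw,
      ← LinearMap.comp_apply, hd, LinearMap.zero_apply, sub_zero, map_zero]
  refine ⟨cycleClass dC n ⟨u, hu⟩, ?_⟩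
  rw [inducedSucc_cycleClass, ← sub_eq_zero, ← map_sub, cycleClass_eq_zero_iff]
  refine ⟨-(y + t), ?_⟩
  simp only [map_neg, AddSubgroupClass.coe_sub, hfu, sub_sub_cancel_left]

end TwoChainMaps

end JZ

namespace JZH

section TensorPowers

variable {R M N P Q : Type*} [CommRing R] [AddCommGroup M] [Module R M] [AddCommGroup N]
  [Module R N] [AddCommGroup P] [Module R P] [AddCommGroup Q] [Module R Q]

theorem tmul_tprod_eq_zero {ι : Type*} (q : Q) {m : ι → M} (i : ι) (hi : m i = 0) :
    q ⊗ₜ[R] tprod R m = 0 := by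
  rw [(PiTensorProduct.tprod R).map_coord_zero i hi, TensorProduct.tmul_zero]

theorem piTensorProduct_map_surjective {ι : Type*} {f : M →ₗ[R] N}
    (hf : Function.Surjective f) :
    Function.Surjective (PiTensorProduct.map fun _ : ι => f) := by
  rw [← LinearMap.range_eq_top, PiTensorProduct.map_range_eq_span_tprod, eq_top_iff,
    ← PiTensorProduct.span_tprod_eq_top]
  refine Submodule.span_mono ?_
  rintro _ ⟨y, rfl⟩
  exact ⟨fun i => (hf (y i)).choose, congrArg _ (funext fun i => (hf (y i)).choose_spec)⟩

theorem exact_piTensorProduct_map {ι : Type*} [Unique ι] {f : M →ₗ[R] N} {g : N →ₗ[R] P}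
    (hfg : Function.Exact f g) :
    Function.Exact (PiTensorProduct.map fun _ : ι => f) (PiTensorProduct.map fun _ : ι => g) := by
  refine hfg.of_ladder_linearEquiv_of_exact
    (e₁ := (subsingletonEquiv (default : ι)).symm) (e₂ := (subsingletonEquiv (default : ι)).symm)
    (e₃ := (subsingletonEquiv (default : ι)).symm) ?_ ?_ <;>
  · ext
    simp

theorem exact_tensorProduct_map_piTensorProduct_map {ι : Type*} [Unique ι] {f : M →ₗ[R] N}
    {g : N →ₗ[R] P} (hfg : Function.Exact f g) (hg : Function.Surjective g) :
    Function.Exact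
      (TensorProduct.map (LinearMap.id : Q →ₗ[R] Q) (PiTensorProduct.map fun _ : ι => f))
      (TensorProduct.map (LinearMap.id : Q →ₗ[R] Q) (PiTensorProduct.map fun _ : ι => g)) :=
  lTensor_exact Q (exact_piTensorProduct_map hfg) (piTensorProduct_map_surjective hg)

end TensorPowers

variable {k : Type} [Field k] {A : Type} [Ring A] [Algebra k A] {B : Subalgebra k A}
variable {X : Type} [AddCommGroup X] [Module k X]

theorem πQ_surjective : Function.Surjective (πQ k A B) :=
  Submodule.mkQ_surjective _

theorem πQ_coe (b : B) : πQ k A B (b : A) = 0 :=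
  (Submodule.Quotient.mk_eq_zero _).2 b.2

theorem exact_val_πQ : Function.Exact B.val.toLinearMap (πQ k A B) := fun a =>
  (Submodule.Quotient.mk_eq_zero _).trans ⟨fun ha => ⟨⟨a, ha⟩, rfl⟩, fun ⟨b, hb⟩ => hb ▸ b.2⟩

section ChainMaps

variable (k A B X) in
/-- The map `id ⊗ π^{⊗(n + 1)}` from Hochschild chains of `A` to the `k`-tensor product of which
the relative chains are a quotient; `κ` is this map followed by the quotient map. -/
noncomputable def πTensor (n : ℕ) :
    CH k A X (n + 1) →ₗ[k] X ⊗[k] (⨂[k] (_ : Fin (n + 1)), QM k A B) :=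
  TensorProduct.map LinearMap.id (PiTensorProduct.map fun _ => πQ k A B)

theorem πTensor_tmul (n : ℕ) (x : X) (a : Fin (n + 1) → A) :
    πTensor k A B X n (x ⊗ₜ[k] tprod k a) = x ⊗ₜ[k] tprod k fun i => πQ k A B (a i) :=
  congrArg (x ⊗ₜ[k] ·) (PiTensorProduct.map_tprod _ a)

theorem ker_πTensor_zero :
    LinearMap.ker (πTensor k A B X 0) = LinearMap.range (ιmap k A B X 1) :=
  (exact_tensorProduct_map_piTensorProduct_map (ι := Fin 1) exact_val_πQ
    πQ_surjective).linearMap_ker_eq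

theorem πTensor_comp_ιmap_succ (n : ℕ) :
    (πTensor k A B X n).comp (ιmap k A B X (n + 1)) = 0 := by
  change (TensorProduct.map LinearMap.id _).comp (TensorProduct.map LinearMap.id _) = 0
  rw [← TensorProduct.map_comp, ← PiTensorProduct.map_comp, exact_val_πQ.linearMap_comp_eq_zero]
  ext x b
  simpa using tmul_tprod_eq_zero x (m := fun _ => (0 : QM k A B)) (0 : Fin (n + 1)) rfl

variable [Module A X] [Module Aᵐᵒᵖ X]

theorem κmap_succ_surjective (n : ℕ) : Function.Surjective (κmap k A B X (n + 1)) :=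
  (Submodule.mkQ_surjective (relRel k A B X n)).comp <|
    TensorProduct.map_surjective Function.surjective_id
      (piTensorProduct_map_surjective πQ_surjective)

theorem κmap_succ_comp_ιmap_succ (n : ℕ) :
    (κmap k A B X (n + 1)).comp (ιmap k A B X (n + 1)) = 0 := by
  change ((mkRC k A B X n).comp (πTensor k A B X n)).comp (ιmap k A B X (n + 1)) = 0
  rw [LinearMap.comp_assoc, πTensor_comp_ιmap_succ, LinearMap.comp_zero]

end ChainMaps

section LowDegrees

variable [Module A X] [Module Aᵐᵒᵖ X]

theorem IsHochschildDiff.apply_one {d : ∀ n, CH k A X (n + 1) →ₗ[k] CH k A X n}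
    (hd : IsHochschildDiff k A X d) (x : X) (a : Fin 2 → A) :
    d 1 (x ⊗ₜ[k] tprod k a) =
      ((op (a 0) • x) ⊗ₜ[k] (tprod k fun _ => a 1) - x ⊗ₜ[k] (tprod k fun _ => a 0 * a 1)
        + (a 1 • x) ⊗ₜ[k] (tprod k fun _ => a 0) : X ⊗[k] (⨂[k] (_ : Fin 1), A)) := by
  have hmerge : mergeFun (fun y z => y * z) a 0 = fun _ => a 0 * a 1 := eq_const_of_unique _
  have htail : (fun i : Fin 1 => a i.succ) = fun _ => a 1 := eq_const_of_unique _
  have hinit : (fun i : Fin 1 => a i.castSucc) = fun _ => a 0 := eq_const_of_unique _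
  refine (hd.2 0 x a).trans ?_
  change (_ + (∑ j : Fin 1, _) + _ : X ⊗[k] (⨂[k] (_ : Fin 1), A)) = _
  rw [Fin.sum_univ_one, hmerge, htail, hinit]
  simp [sub_eq_add_neg]

theorem IsHochschildDiff.comp_zero_one [SMulCommClass A Aᵐᵒᵖ X]
    {d : ∀ n, CH k A X (n + 1) →ₗ[k] CH k A X n} (hd : IsHochschildDiff k A X d) :
    (d 0).comp (d 1) = 0 := by
  refine TensorProduct.ext (LinearMap.ext fun x => PiTensorProduct.ext
    (MultilinearMap.ext fun a => ?_))
  let d₀ : X ⊗[k] (⨂[k] (_ : Fin 1), A) →ₗ[k] X := d 0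
  have hd₀ (y : X) (c : A) : d₀ (y ⊗ₜ[k] tprod k fun _ => c) = op c • y - c • y := hd.1 y _
  calc d₀ (d 1 (x ⊗ₜ[k] tprod k a))
      = (op (a 1) • op (a 0) • x - a 1 • op (a 0) • x)
          - (op (a 0 * a 1) • x - (a 0 * a 1) • x) + (op (a 0) • a 1 • x - a 0 • a 1 • x) := by
        rw [hd.apply_one, map_add, map_sub, hd₀, hd₀, hd₀]
    _ = 0 := by
        rw [op_mul, mul_smul, mul_smul, smul_comm (a 1) (op (a 0)) x]
        abel

theorem ker_κmap_zero_le {d : ∀ n, CHB k A B X (n + 1) →ₗ[k] CHB k A B X n}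
    (hd : IsHochschildDiffB k A B X d) :
    LinearMap.ker (κmap k A B X 0) ≤ (LinearMap.range (d 0)).map (ιmap k A B X 0) := by
  change LinearMap.ker (commRel k A B X).mkQ ≤ _
  rw [Submodule.ker_mkQ]
  refine Submodule.span_le.2 ?_
  rintro _ ⟨b, x, rfl⟩
  let d₀ : X ⊗[k] (⨂[k] (_ : Fin 1), B) →ₗ[k] X := d 0
  have hboundary : d₀ (x ⊗ₜ[k] tprod k fun _ => b) = op (b : A) • x - (b : A) • x := hd.1 x _
  refine ⟨_, ⟨-(x ⊗ₜ[k] tprod k fun _ => b : X ⊗[k] (⨂[k] (_ : Fin 1), B)), rfl⟩, ?_⟩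
  change d₀ (-_) = _
  rw [map_neg, hboundary, neg_sub]

theorem πTensor_apply_one {d : ∀ n, CH k A X (n + 1) →ₗ[k] CH k A X n}
    (hd : IsHochschildDiff k A X d) (x : X) (a b : A) :
    πTensor k A B X 0 (d 1 (x ⊗ₜ[k] tprod k ![a, b])) =
      (op a • x) ⊗ₜ[k] (tprod k fun _ => πQ k A B b)
        - x ⊗ₜ[k] (tprod k fun _ => πQ k A B (a * b))
        + (b • x) ⊗ₜ[k] (tprod k fun _ => πQ k A B a) := by
  let p : X ⊗[k] (⨂[k] (_ : Fin 1), A) →ₗ[k] X ⊗[k] (⨂[k] (_ : Fin 1), QM k A B) :=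
    πTensor k A B X 0
  have hp (y : X) (c : A) :
      p (y ⊗ₜ[k] tprod k fun _ => c) = y ⊗ₜ[k] tprod k fun _ => πQ k A B c :=
    πTensor_tmul 0 y _
  change p _ = _
  rw [hd.apply_one, map_add, map_sub, hp, hp, hp]
  rfl

theorem πTensor_boundary_coe_left {d : ∀ n, CH k A X (n + 1) →ₗ[k] CH k A X n}
    (hd : IsHochschildDiff k A X d) (x : X) (b : B) (a : A) :
    πTensor k A B X 0 (d 1 (x ⊗ₜ[k] tprod k ![(b : A), a])) =
      (op (b : A) • x) ⊗ₜ[k] (tprod k fun _ => πQ k A B a)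
        - x ⊗ₜ[k] (tprod k fun _ => Ql k A B b (πQ k A B a)) := by
  rw [πTensor_apply_one hd, tmul_tprod_eq_zero (a • x) 0 (πQ_coe b), add_zero]
  rfl

theorem πTensor_boundary_coe_right {d : ∀ n, CH k A X (n + 1) →ₗ[k] CH k A X n}
    (hd : IsHochschildDiff k A X d) (x : X) (a : A) (b : B) :
    πTensor k A B X 0 (d 1 (x ⊗ₜ[k] tprod k ![a, (b : A)])) =
      ((b : A) • x) ⊗ₜ[k] (tprod k fun _ => πQ k A B a)
        - x ⊗ₜ[k] (tprod k fun _ => Qr k A B b (πQ k A B a)) := by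
  rw [πTensor_apply_one hd, tmul_tprod_eq_zero (op a • x) 0 (πQ_coe b), zero_sub, neg_add_eq_sub]
  rfl

theorem relRel_zero_le {d : ∀ n, CH k A X (n + 1) →ₗ[k] CH k A X n}
    (hd : IsHochschildDiff k A X d) :
    relRel k A B X 0 ≤ (LinearMap.range (d 1)).map (πTensor k A B X 0) := by
  have lift_const (α : Fin 1 → QM k A B) : ∃ a : A, α = fun _ => πQ k A B a :=
    (πQ_surjective (α 0)).imp fun a ha => (eq_const_of_unique α).trans (congrArg _ ha.symm)
  refine Submodule.span_le.2 ?_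
  rintro z ((⟨x, α, b, rfl⟩ | ⟨-, -, -, i, -⟩) | ⟨x, α, b, rfl⟩)
  · obtain ⟨a, rfl⟩ := lift_const α
    refine ⟨_, ⟨x ⊗ₜ[k] tprod k ![(b : A), a], rfl⟩, ?_⟩
    rw [πTensor_boundary_coe_left hd, Function.update_eq_const_of_subsingleton (α := Fin 1)]
    rfl
  · exact i.elim0
  · obtain ⟨a, rfl⟩ := lift_const α
    refine sub_mem_comm_iff.1 ⟨_, ⟨x ⊗ₜ[k] tprod k ![a, (b : A)], rfl⟩, ?_⟩
    rw [πTensor_boundary_coe_right hd, Function.update_eq_const_of_subsingleton (α := Fin 1)]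
    rfl

theorem ker_κmap_one_le {d : ∀ n, CH k A X (n + 1) →ₗ[k] CH k A X n}
    (hd : IsHochschildDiff k A X d) :
    LinearMap.ker (κmap k A B X 1) ≤ LinearMap.range (ιmap k A B X 1) ⊔ LinearMap.range (d 1) :=
  calc LinearMap.ker (κmap k A B X 1)
      = (relRel k A B X 0).comap (πTensor k A B X 0) :=
        (LinearMap.ker_comp _ _).trans (congrArg _ (Submodule.ker_mkQ _))
    _ ≤ ((LinearMap.range (d 1)).map (πTensor k A B X 0)).comap (πTensor k A B X 0) :=
        Submodule.comap_mono (relRel_zero_le hd)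
    _ = LinearMap.range (ιmap k A B X 1) ⊔ LinearMap.range (d 1) := by
        rw [Submodule.comap_map_eq, ker_πTensor_zero, sup_comm]

end LowDegrees

end JZH

theorem jacobi_zariski_exact_and_surjective_in_degree_one_of_finite_dimensional_general
    (k : Type) [Field k] (A : Type) [Ring A] [Algebra k A] (B : Subalgebra k A)
    (X : Type) [AddCommGroup X] [Module k X]
    [Module A X] [Module Aᵐᵒᵖ X] [SMulCommClass A Aᵐᵒᵖ X]
    (σ : JZH.QM k A B →ₗ[k] A) (_hσ : (JZH.πQ k A B).comp σ = LinearMap.id)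
    (bB : ∀ n, JZH.CHB k A B X (n + 1) →ₗ[k] JZH.CHB k A B X n)
    (hbB : JZH.IsHochschildDiffB k A B X bB)
    (bA : ∀ n, JZH.CH k A X (n + 1) →ₗ[k] JZH.CH k A X n)
    (hbA : JZH.IsHochschildDiff k A X bA)
    (bR : ∀ n, JZH.RC k A B X (n + 1) →ₗ[k] JZH.RC k A B X n)
    (_hbR : JZH.IsRelDiff k A B X σ bR)
    (hsqι : ∀ n, (bA n).comp (JZH.ιmap k A B X (n + 1)) = (JZH.ιmap k A B X n).comp (bB n))
    (hsqκ : ∀ n, (bR n).comp (JZH.κmap k A B X (n + 1)) = (JZH.κmap k A B X n).comp (bA n)) :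
    Function.Surjective (JZ.inducedSucc bA bR (JZH.κmap k A B X) hsqκ 0) ∧
    LinearMap.ker (JZ.inducedSucc bA bR (JZH.κmap k A B X) hsqκ 0) =
      LinearMap.range (JZ.inducedSucc bB bA (JZH.ιmap k A B X) hsqι 0) := by
  have hκι := JZH.κmap_succ_comp_ιmap_succ (k := k) (B := B) (X := X) 0
  refine ⟨JZ.inducedSucc_surjective_of_ker_le hsqι hsqκ hκι (JZH.κmap_succ_surjective 0)
    (JZH.ker_κmap_zero_le hbB), le_antisymm ?_ (JZ.range_inducedSucc_le_ker hsqι hsqκ hκι)⟩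
  exact JZ.ker_inducedSucc_le_range hsqι hsqκ hbA.comp_zero_one Function.injective_id
    (JZH.κmap_succ_surjective 1) (JZH.ker_κmap_one_le hbA)

/-- **Statement 19.** For an extension `B ⊆ A` of finite-dimensional `k`-algebras and a
finite-dimensional `A`-bimodule `X`, the Jacobi-Zariski long nearly exact sequence is exact in
degree `1` and ends surjectively: `K : H_1(A,X) → H_1(A|B,X)` is surjective and
`Ker K = Im (I : H_1(B,X) → H_1(A,X))`. -/
theorem jacobi_zariski_exact_and_surjective_in_degree_one_of_finite_dimensional
    (k : Type) [Field k] (A : Type) [Ring A] [Algebra k A] [FiniteDimensional k A]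
    (B : Subalgebra k A)
    (X : Type) [AddCommGroup X] [Module k X] [FiniteDimensional k X]
    [Module A X] [Module Aᵐᵒᵖ X] [SMulCommClass A Aᵐᵒᵖ X]
    [IsScalarTower k A X] [IsScalarTower k Aᵐᵒᵖ X]
    (σ : JZH.QM k A B →ₗ[k] A) (hσ : (JZH.πQ k A B).comp σ = LinearMap.id)
    (bB : ∀ n, JZH.CHB k A B X (n+1) →ₗ[k] JZH.CHB k A B X n)
    (hbB : JZH.IsHochschildDiffB k A B X bB)
    (hbB2 : ∀ n, (bB n).comp (bB (n+1)) = 0)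
    (bA : ∀ n, JZH.CH k A X (n+1) →ₗ[k] JZH.CH k A X n)
    (hbA : JZH.IsHochschildDiff k A X bA)
    (hbA2 : ∀ n, (bA n).comp (bA (n+1)) = 0)
    (bR : ∀ n, JZH.RC k A B X (n+1) →ₗ[k] JZH.RC k A B X n)
    (hbR : JZH.IsRelDiff k A B X σ bR)
    (hbR2 : ∀ n, (bR n).comp (bR (n+1)) = 0)
    (hsqι : ∀ n, (bA n).comp (JZH.ιmap k A B X (n+1)) = (JZH.ιmap k A B X n).comp (bB n))
    (hsqκ : ∀ n, (bR n).comp (JZH.κmap k A B X (n+1)) = (JZH.κmap k A B X n).comp (bA n)) :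
    Function.Surjective (JZ.inducedSucc bA bR (JZH.κmap k A B X) hsqκ 0) ∧
    LinearMap.ker (JZ.inducedSucc bA bR (JZH.κmap k A B X) hsqκ 0) =
      LinearMap.range (JZ.inducedSucc bB bA (JZH.ιmap k A B X) hsqι 0) :=
  jacobi_zariski_exact_and_surjective_in_degree_one_of_finite_dimensional_general
    k A B X σ hσ bB hbB bA hbA bR hbR hsqι hsqκ
end
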